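/- Let D be a non-dictatorial, unidimensional domain that admits no invariant, tops-only and strategy-proof rule f : D^2 → A, and let D be an (a,b)-semi-hybrid domain on a tree T. Then every tops-only and strategy-proof rule f : D^2 → A is a hybrid rule, namely an (â,b̂)-hybrid rule on some tree T̂ whose free zone ⟨â, b̂|T̂⟩ contains ⟨a, b|T⟩; in particular, every tops-only and strategy-proof rule f : D^2 → A behaves like a dictatorship on the free zone ⟨a, b|T⟩. -/

import Mathlib

open Classical


/-- A strict preference over `A`, represented as a ranking bijection:
`P k` is the `(k+1)`-th ranked alternative. -/
abbrev Pref (A : Type*) [Fintype A] := Fin (Fintype.card A) ≃ A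

variable {A : Type*} [Fintype A] [DecidableEq A] [Nonempty A]

/-- `rk P k` : the `(k+1)`-th ranked alternative of `P` (0-indexed, so `rk P 0 = r₁(P)`). -/
noncomputable def rk (P : Pref A) (k : ℕ) : A :=
  if h : k < Fintype.card A then P ⟨k, h⟩ else Classical.arbitrary A

/-- The peak `r₁(P)`. -/
noncomputable def peak (P : Pref A) : A := rk P 0

/-- The second-ranked alternative `r₂(P)`. -/
noncomputable def second (P : Pref A) : A := rk P 1

/-- `a` is strictly preferred to `b` under `P`. -/
def prefers (P : Pref A) (a b : A) : Prop := P.symm a < P.symm b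

/-- Two preferences are completely reversed. -/
def Reversed (P P' : Pref A) : Prop := ∀ a b : A, prefers P a b ↔ prefers P' b a

/-- A profile lies in the domain `D`. -/
def InDom (D : Set (Pref A)) {n : ℕ} (P : Fin n → Pref A) : Prop := ∀ i, P i ∈ D

/-- Unanimity (an SCF satisfying it is called a rule). -/
def IsRule (D : Set (Pref A)) {n : ℕ} (f : (Fin n → Pref A) → A) : Prop :=
  ∀ P : Fin n → Pref A, InDom D P → ∀ a : A, (∀ i, peak (P i) = a) → f P = a

/-- Strategy-proofness (relative to the domain `D`). -/
def StrategyProof (D : Set (Pref A)) {n : ℕ} (f : (Fin n → Pref A) → A) : Prop :=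
  ∀ P : Fin n → Pref A, InDom D P → ∀ i : Fin n, ∀ Q ∈ D,
    f P = f (Function.update P i Q) ∨ prefers (P i) (f P) (f (Function.update P i Q))

/-- The tops-only property. -/
def TopsOnly (D : Set (Pref A)) {n : ℕ} (f : (Fin n → Pref A) → A) : Prop :=
  ∀ P P' : Fin n → Pref A, InDom D P → InDom D P' →
    (∀ i, peak (P i) = peak (P' i)) → f P = f P'

/-- Anonymity. -/
def Anonymous (D : Set (Pref A)) {n : ℕ} (f : (Fin n → Pref A) → A) : Prop :=
  ∀ P : Fin n → Pref A, InDom D P → ∀ σ : Equiv.Perm (Fin n), f (P ∘ σ) = f P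

/-- `f` behaves like a dictatorship on `B`. -/
def DictatorOn (D : Set (Pref A)) {n : ℕ} (f : (Fin n → Pref A) → A) (B : Set A) : Prop :=
  ∃ i : Fin n, ∀ P : Fin n → Pref A, InDom D P → (∀ j, peak (P j) ∈ B) → f P = peak (P i)

/-- `f` is a dictatorship. -/
def Dictatorship (D : Set (Pref A)) {n : ℕ} (f : (Fin n → Pref A) → A) : Prop :=
  DictatorOn D f Set.univ

/-- A dictatorial domain. -/
def DictatorialDomain (D : Set (Pref A)) : Prop :=
  ∀ n : ℕ, 2 ≤ n → ∀ f : (Fin n → Pref A) → A,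
    IsRule D f → StrategyProof D f → Dictatorship D f

/-- A tops-only domain. -/
def TopsOnlyDomain (D : Set (Pref A)) : Prop :=
  ∀ n : ℕ, 2 ≤ n → ∀ f : (Fin n → Pref A) → A,
    IsRule D f → StrategyProof D f → TopsOnly D f

/-- Adjacency of two alternatives relative to the domain `D`. -/
def DomAdjacent (D : Set (Pref A)) (a b : A) : Prop :=
  ∃ P ∈ D, ∃ P' ∈ D, peak P = a ∧ second P = b ∧ peak P' = b ∧ second P' = a ∧
    ∀ k : ℕ, 2 ≤ k → rk P k = rk P' k

/-- The adjacency graph `G_∼` of the domain `D`. -/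
noncomputable def adjGraph (D : Set (Pref A)) : SimpleGraph A :=
  SimpleGraph.fromRel (DomAdjacent D)

/-- Path-connectedness of the domain. -/
def PathConnectedDom (D : Set (Pref A)) : Prop := (adjGraph D).Connected

/-- Diversity: the domain contains two completely reversed preferences. -/
def Diversity (D : Set (Pref A)) : Prop := ∃ P ∈ D, ∃ P' ∈ D, Reversed P P'

/-- `S(D^a)`: the set of alternatives second-ranked in some preference of `D` with peak `a`. -/
def secondsSet (D : Set (Pref A)) (a : A) : Set A := {b | ∃ P ∈ D, peak P = a ∧ second P = b}

/-- Leaf symmetry. -/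
def LeafSymmetry (D : Set (Pref A)) : Prop :=
  ∀ x : A, (∃! y, (adjGraph D).Adj x y) →
    (∃ u ∈ secondsSet D x, ∃ v ∈ secondsSet D x, u ≠ v) →
    ∃ z ∈ secondsSet D x, ¬ (adjGraph D).Adj x z ∧ x ∈ secondsSet D z

/-- Unidimensionality: path-connectedness, diversity and leaf symmetry. -/
def Unidimensional (D : Set (Pref A)) : Prop :=
  PathConnectedDom D ∧ Diversity D ∧ LeafSymmetry D

/-- The unique seconds property. -/
def UniqueSeconds (D : Set (Pref A)) : Prop := ∃ x b : A, secondsSet D x = {b}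

/-- Minimal richness. -/
def MinimallyRich (D : Set (Pref A)) : Prop := ∀ a : A, ∃ P ∈ D, peak P = a

/-- The vertex set `⟨x, y|T⟩` of the (in a tree, unique) shortest path between `x` and `y`. -/
def intv (T : SimpleGraph A) (x y : A) : Set A :=
  {z | T.dist x z + T.dist z y = T.dist x y}

/-- `a'` is the projection of `a` onto `B` in `T`. -/
def IsProjPt (T : SimpleGraph A) (B : Set A) (a a' : A) : Prop :=
  a' ∈ B ∧ ∀ b ∈ B, a' ∈ intv T a b

/-- The projection `Proj(a, B)` of `a` onto a path-closed set `B` in the tree `T`. -/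
noncomputable def projOn (T : SimpleGraph A) (B : Set A) (a : A) : A :=
  if h : ∃ a', IsProjPt T B a a' then h.choose else a

/-- `Γ(P)`: the vertex set of the minimal subtree of `T` spanning all the peaks. -/
def gammaSet (T : SimpleGraph A) {n : ℕ} (P : Fin n → Pref A) : Set A :=
  {c | ∃ i j : Fin n, c ∈ intv T (peak (P i)) (peak (P j))}

/-- The projection rule on `T` w.r.t. `xbar`. -/
noncomputable def projRule (T : SimpleGraph A) (xbar : A) {n : ℕ}
    (P : Fin n → Pref A) : A :=
  projOn T (gammaSet T P) xbar

/-- Single-peakedness on a tree. -/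
def SinglePeaked (T : SimpleGraph A) (P : Pref A) : Prop :=
  ∀ c d : A, c ≠ d → c ∈ intv T (peak P) d → prefers P c d

/-- Semi-single-peakedness on `T` w.r.t. the threshold `xbar`. -/
def SemiSP (T : SimpleGraph A) (xbar : A) (P : Pref A) : Prop :=
  (∀ c d : A, c ∈ intv T (peak P) xbar → d ∈ intv T (peak P) xbar → c ≠ d →
    c ∈ intv T (peak P) d → prefers P c d) ∧
  (∀ c : A, c ∉ intv T (peak P) xbar →
    prefers P (projOn T (intv T (peak P) xbar) c) c)

/-- A semi-single-peaked domain. -/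
def SemiSPDomain (D : Set (Pref A)) : Prop :=
  ∃ (T : SimpleGraph A) (xbar : A), T.IsTree ∧
    D ⊆ {P | SemiSP T xbar P} ∧ (adjGraph D).Connected

/-- `A^{a⇀b}`: the alternatives whose path to `b` goes through `a`. -/
def sideSet (T : SimpleGraph A) (a b : A) : Set A := {z | a ∈ intv T z b}

/-- `x = max^P(B)`: `x` is `P`'s best alternative of `B`. -/
def IsBestOf (P : Pref A) (x : A) (B : Set A) : Prop :=
  x ∈ B ∧ ∀ y ∈ B, y ≠ x → prefers P x y

/-- `a` and `b` are dual-thresholds in the tree `T`. -/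
def DualThresholds (T : SimpleGraph A) (a b : A) : Prop :=
  a ≠ b ∧ ∀ c : A, c ∉ intv T a b →
    projOn T (intv T a b) c = a ∨ projOn T (intv T a b) c = b

/-- An `(a,b)`-semi-hybrid preference on `T`. -/
def SemiHybridPref (T : SimpleGraph A) (a b : A) (P : Pref A) : Prop :=
  (peak P ∈ sideSet T a b \ {a} → SemiSP T a P ∧ IsBestOf P b (sideSet T b a)) ∧
  (peak P ∈ sideSet T b a \ {b} → SemiSP T b P ∧ IsBestOf P a (sideSet T a b)) ∧
  (peak P ∈ intv T a b → IsBestOf P a (sideSet T a b) ∧ IsBestOf P b (sideSet T b a))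

/-- `x` is a leaf of the subgraph of `G` induced on `B`. -/
def IsLeafOn (G : SimpleGraph A) (B : Set A) (x : A) : Prop :=
  x ∈ B ∧ ∃! y, y ∈ B ∧ G.Adj x y

/-- `D` is an `(a,b)`-semi-hybrid domain on the tree `T`. -/
def SemiHybridDomainOn (D : Set (Pref A)) (T : SimpleGraph A) (a b : A) : Prop :=
  T.IsTree ∧ DualThresholds T a b ∧ D ⊆ {P | SemiHybridPref T a b P} ∧
  (adjGraph D).Connected ∧
  (¬ ∃ (T' : SimpleGraph A) (a' b' : A), T'.IsTree ∧ DualThresholds T' a' b' ∧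
      D ⊆ {P | SemiHybridPref T' a' b' P} ∧ intv T' a' b' ⊂ intv T a b) ∧
  ((adjGraph D).IsTree →
    ∀ x : A, IsLeafOn (adjGraph D) (intv T a b) x →
      ∃ P ∈ D, ¬ SemiSP (adjGraph D) x P)

/-- `D` is a semi-hybrid domain. -/
def SemiHybridDomain (D : Set (Pref A)) : Prop :=
  ∃ (T : SimpleGraph A) (a b : A), SemiHybridDomainOn D T a b

/-- An `(a,b)`-hybrid preference on `T`. -/
def HybridPref (T : SimpleGraph A) (a b : A) (P : Pref A) : Prop :=
  (∀ y z : A, ((y ∈ sideSet T a b ∧ z ∈ sideSet T a b) ∨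
      (y ∈ sideSet T b a ∧ z ∈ sideSet T b a)) → y ≠ z →
    y ∈ intv T (peak P) z → prefers P y z) ∧
  (peak P ∈ sideSet T a b \ {a} → IsBestOf P a (intv T a b)) ∧
  (peak P ∈ sideSet T b a \ {b} → IsBestOf P b (intv T a b))

/-- `D` is an `(a,b)`-hybrid domain on the tree `T`. -/
def HybridDomainOn (D : Set (Pref A)) (T : SimpleGraph A) (a b : A) : Prop :=
  T.IsTree ∧ DualThresholds T a b ∧ D ⊆ {P | HybridPref T a b P} ∧
  (adjGraph D).Connected ∧
  (¬ ∃ (T' : SimpleGraph A) (a' b' : A), T'.IsTree ∧ DualThresholds T' a' b' ∧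
      D ⊆ {P | HybridPref T' a' b' P} ∧ intv T' a' b' ⊂ intv T a b) ∧
  3 ≤ (intv T a b).ncard

/-- `f` is an `(a,b)`-hybrid rule on the tree `T`. -/
def IsHybridRule (D : Set (Pref A)) {n : ℕ} (f : (Fin n → Pref A) → A)
    (T : SimpleGraph A) (a b : A) : Prop :=
  T.IsTree ∧ DualThresholds T a b ∧ 3 ≤ (intv T a b).ncard ∧
  ∃ i : Fin n, ∀ P : Fin n → Pref A, InDom D P →
    (peak (P i) ∈ intv T a b → f P = peak (P i)) ∧
    (peak (P i) ∈ sideSet T a b \ {a} → f P = projOn T (gammaSet T P) a) ∧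
    (peak (P i) ∈ sideSet T b a \ {b} → f P = projOn T (gammaSet T P) b)

/-- The PNT rule on `T` w.r.t. the edge `(x, y)`, with the two distinguished voters `i, j`. -/
noncomputable def pntRule (T : SimpleGraph A) (x y : A) {n : ℕ} (i j : Fin n)
    (P : Fin n → Pref A) : A :=
  if peak (P i) ∈ sideSet T y x then peak (P i)
  else if peak (P j) ∈ sideSet T x y then projOn T (gammaSet T P) x
  else if prefers (P j) x y then x else y

/-- `(x, y)` is a critical spot in `T` for the domain `D`. -/
def CriticalSpot (D : Set (Pref A)) (T : SimpleGraph A) (x y : A) : Prop :=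
  T.Adj x y ∧
  (∀ P ∈ D, peak P ∈ sideSet T x y → SemiSP T y P) ∧
  (∀ P ∈ D, peak P ∈ sideSet T y x → IsBestOf P x (sideSet T x y)) ∧
  (∃ P ∈ D, ∃ P' ∈ D, peak P = peak P' ∧ peak P ∈ sideSet T y x ∧
    prefers P y x ∧ prefers P' x y)

/-- `x` is a path in the graph `G` (pairwise distinct, consecutive vertices adjacent). -/
def IsPathIn (G : SimpleGraph A) {v : ℕ} (x : Fin v → A) : Prop :=
  Function.Injective x ∧
  ∀ (k : ℕ) (h : k + 1 < v), G.Adj (x ⟨k, Nat.lt_of_succ_lt h⟩) (x ⟨k + 1, h⟩)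

/-- `x` is a cycle in the graph `G`. -/
def IsCycleIn (G : SimpleGraph A) {v : ℕ} (x : Fin v → A) : Prop :=
  Function.Injective x ∧
  (∀ (k : ℕ) (h : k + 1 < v), G.Adj (x ⟨k, Nat.lt_of_succ_lt h⟩) (x ⟨k + 1, h⟩)) ∧
  ∀ (h : 0 < v), G.Adj (x ⟨v - 1, Nat.sub_lt h Nat.one_pos⟩) (x ⟨0, h⟩)

/-- The line `L^A` induced by the ranking of the preference `P`. -/
noncomputable def lineOf (P : Pref A) : SimpleGraph A :=
  SimpleGraph.fromRel (fun a b =>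
    ∃ k : ℕ, k + 1 < Fintype.card A ∧ rk P k = a ∧ rk P (k + 1) = b)

/-- The median of three natural numbers. -/
def med3 (a b c : ℕ) : ℕ := max (min a b) (min (max a b) c)

/-- The two-voter profile in which voter `i` reports `Pi` and the other voter reports `Q`. -/
noncomputable def prof2 (i : Fin 2) (Pi Q : Pref A) : Fin 2 → Pref A :=
  Function.update (fun _ => Q) i Pi

/-!
A two-voter tops-only rule is a function `g` of two peaks. If `x` and `y` are adjacent, then
strategy-proofness leaves two possibilities: either `g x z = g y z`, or `g x z = x` and
`g y z = y`. Hence `g x z` lies on every walk from `x` to a vote `w` with `g w z = w`, so that cut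
vertices of the adjacency graph govern `g`.

At the two completely reversed preferences the outcomes `g (Pl, Pu)` and `g (Pu, Pl)` differ, and
comparing them shows that both belong to the dictatorial zone of the same voter, that is, to the
set of peaks she can impose. Reversal also forces every alternative outside that zone to hang off
one of these two outcomes. Replacing the zone by a path between them therefore turns the adjacency
graph into a tree whose free zone is the dictatorial zone; the domain is semi-hybrid and `g` is
hybrid on this tree.

For the inclusion of the free zones, the given `(a, b)`-semi-hybrid structure has its own hybrid
rule, with dictatorial zone `⟨a, b|T⟩`. If the latter were not contained in the zone of `g`, then
mixing the two rules would produce either an invariant rule, or a rule whose zone is strictly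
smaller than `⟨a, b|T⟩`; its tree would contradict the minimality of `⟨a, b|T⟩`. Similarly, a zone
with two elements gives rise to an invariant rule.
-/

/-! ### Cut vertices and trees -/

/-- `CutBetween G x z y`: every walk of `G` from `x` to `y` visits `z`. In a tree this says that `z`
lies on the path from `x` to `y`; stated with walks, it also makes sense in an adjacency graph,
which may have cycles. -/
def CutBetween {V : Type*} (G : SimpleGraph V) (x z y : V) : Prop :=
  ∀ p : G.Walk x y, z ∈ p.support

namespace CutBetween

variable {V : Type*} {G H : SimpleGraph V} {u v w x y z : V}

theorem left (x y : V) : CutBetween G x x y := fun p => p.start_mem_support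

theorem right (x y : V) : CutBetween G x y y := fun p => p.end_mem_support

theorem symm (h : CutBetween G x z y) : CutBetween G y z x := fun p => by
  simpa using h p.reverse

theorem eq_of_self (h : CutBetween G x z x) : z = x := by
  simpa using h .nil

theorem eq_or_eq_of_adj (hxy : G.Adj x y) (h : CutBetween G x z y) : z = x ∨ z = y := by
  simpa using h hxy.toWalk

theorem left_or_right (h : CutBetween G x z y) (w : V) :
    CutBetween G x z w ∨ CutBetween G w z y := by
  by_contra! hc
  simp only [CutBetween, not_forall] at hc
  obtain ⟨⟨p, hp⟩, q, hq⟩ := hc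
  exact ((p.mem_support_append_iff q).1 (h (p.append q))).elim hp hq

theorem trans_right (h : CutBetween G x v z) (h' : CutBetween G v w z) : CutBetween G x w z :=
  fun p => p.support_dropUntil_subset_support (h p) (h' (p.dropUntil v (h p)))

theorem trans_left (h : CutBetween G x v z) (h' : CutBetween G x w v) : CutBetween G x w z :=
  (h.symm.trans_right h'.symm).symm

theorem dist_add_dist (hG : G.Connected) (h : CutBetween G x z y) :
    G.dist x z + G.dist z y = G.dist x y := by
  obtain ⟨p, hp⟩ := hG.exists_walk_length_eq_dist x y
  refine le_antisymm ?_ hG.dist_triangle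
  calc G.dist x z + G.dist z y
      ≤ (p.takeUntil z (h p)).length + (p.dropUntil z (h p)).length :=
        add_le_add (SimpleGraph.dist_le _) (SimpleGraph.dist_le _)
    _ = G.dist x y := by rw [← SimpleGraph.Walk.length_append, p.take_spec, hp]

theorem antisymm_right (hG : G.Connected) (h : CutBetween G x y z) (h' : CutBetween G x z y) :
    y = z := by
  have hyz := h.dist_add_dist hG
  have hzy := h'.dist_add_dist hG
  exact hG.dist_eq_zero_iff.1 (by omega)

theorem antisymm_left (hG : G.Connected) (h : CutBetween G z y x) (h' : CutBetween G y z x) :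
    y = z :=
  antisymm_right hG h.symm h'.symm

theorem cancel_left (hG : G.Connected) (h : CutBetween G x v w) (h' : CutBetween G x w y) :
    CutBetween G v w y :=
  (h'.left_or_right v).elim (fun hxwv => antisymm_right hG h hxwv ▸ left v y) id

theorem of_unique_exit {S : Set V} (hS : ∀ s ∈ S, ∀ t, t ∉ S → G.Adj s t → s = v) (hx : x ∈ S)
    (hy : y ∉ S) : CutBetween G x v y := by
  intro p
  obtain ⟨d, hd, hdS, hdS'⟩ := p.exists_boundary_dart S hx hy
  exact hS _ hdS _ hdS' d.adj ▸ p.dart_fst_mem_support_of_mem_darts hd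

theorem of_between (hG : G.Connected) {m a c : V} (hu : CutBetween G u m a)
    (hv : CutBetween G v m a) (hc : CutBetween G u c v) : CutBetween G c m a := by
  rcases hu.left_or_right c with humc | h
  · rcases hv.left_or_right c with hvmc | h
    · have hmc : m = c := (hc.left_or_right m).elim (fun h => antisymm_right hG humc h)
        fun h => antisymm_right hG hvmc h.symm
      exact hmc ▸ left m a
    · exact h
  · exact h

theorem eq_of_between (hG : G.Connected) {m c : V} (hc : CutBetween G u c v)
    (hu : CutBetween G u m c) (hv : CutBetween G v m c) : m = c :=
  (of_between hG hu hv hc).eq_of_self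

/-- A walk of `H` from `S` that avoids `e` stays inside `S`, and its vertices remain on the side of
`x` with respect to `e` in `G`. -/
theorem of_invariant {S : Set V} {e : V}
    (hS : ∀ s ∈ S, s ≠ e → ∀ t, t ≠ e → H.Adj s t → t ∈ S ∧ ¬ CutBetween G s e t) (hx : x ∈ S)
    (h : CutBetween G x e y) : CutBetween H x e y := by
  intro p
  induction p with
  | nil => exact h .nil
  | @cons s t y hst p ih =>
    by_cases hs : s = e
    · simp [hs]
    by_cases ht : t = e
    · exact List.mem_cons_of_mem _ (ht ▸ p.start_mem_support)
    obtain ⟨htS, hcut⟩ := hS s hx hs t ht hst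
    exact List.mem_cons_of_mem _ (ih htS ((h.left_or_right t).resolve_left hcut))

theorem of_mem_support (hG : G.IsAcyclic) {p : G.Walk x y} (hp : p.IsPath) (hz : z ∈ p.support) :
    CutBetween G x z y := fun q => by
  have hpq : p = q.bypass := congrArg Subtype.val
    ((hG.subsingleton_path x y).elim ⟨p, hp⟩ q.toPath)
  exact q.support_bypass_subset_support (hpq ▸ hz)

theorem iff_dist (hG : G.IsTree) : CutBetween G x z y ↔ G.dist x z + G.dist z y = G.dist x y := by
  refine ⟨dist_add_dist hG.1, fun h => ?_⟩
  obtain ⟨p, hp⟩ := hG.1.exists_walk_length_eq_dist x z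
  obtain ⟨q, hq⟩ := hG.1.exists_walk_length_eq_dist z y
  refine of_mem_support hG.2 (p := p.append q) ?_ (by simp)
  exact SimpleGraph.Walk.isPath_of_length_eq_dist _
    (by rw [SimpleGraph.Walk.length_append, hp, hq, h])

theorem or_of_adj (hG : G.IsAcyclic) (hxy : G.Adj x y) (z : V) :
    CutBetween G x y z ∨ CutBetween G y x z := by
  refine or_iff_not_imp_left.2 fun h => ?_
  obtain ⟨p, hp⟩ := not_forall.1 h
  have hy : y ∉ p.bypass.support := fun h => hp (p.support_bypass_subset_support h)
  exact of_mem_support hG (p := .cons hxy.symm p.bypass) (p.bypass_isPath.cons hy) (by simp)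

theorem exists_median (hG : G.IsTree) (x y z : V) :
    ∃ m, CutBetween G x m y ∧ CutBetween G x m z ∧ CutBetween G y m z := by
  obtain ⟨p⟩ := hG.1.preconnected z x
  induction p with
  | @nil x => exact ⟨x, left x y, left x x, right y x⟩
  | @cons z z' x hz p ih =>
    obtain ⟨m, hxy, hx, hy⟩ := ih
    by_cases hm : m = z'
    · subst hm
      by_cases hzxy : CutBetween G x z y
      · exact ⟨z, hzxy, right x z, right y z⟩
      · refine ⟨m, hxy, ?_, ?_⟩
        · exact ((or_of_adj hG.2 hz x).resolve_right fun h => hzxy (hxy.trans_left h.symm)).symm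
        · exact ((or_of_adj hG.2 hz y).resolve_right fun h => hzxy (hxy.trans_right h)).symm
    · have cut_z (u : V) (hu : CutBetween G u m z') : CutBetween G u m z :=
        (hu.left_or_right z).elim id fun h =>
          (eq_or_eq_of_adj hz h).resolve_right hm ▸ right u m
      exact ⟨m, hxy, cut_z x hx, cut_z y hy⟩

end CutBetween

/-! ### Gated rules on a graph -/

/-- The part of `G` attached at `v` as seen from `J`: every walk from one of its vertices to `J`
visits `v`. -/
def branch {V : Type*} (G : SimpleGraph V) (J : Set V) (v : V) : Set V :=
  {y | ∀ j ∈ J, CutBetween G y v j}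

section Branch

variable {V : Type*} {G : SimpleGraph V} {J : Set V} {s t v : V}

theorem self_mem_branch (G : SimpleGraph V) (J : Set V) (v : V) : v ∈ branch G J v :=
  fun j _ => .left v j

theorem eq_of_mem_branch_of_mem (hs : s ∈ branch G J v) (hj : s ∈ J) : s = v :=
  (hs s hj).eq_of_self.symm

theorem cutBetween_of_mem_branch (hs : s ∈ branch G J v) (ht : t ∉ branch G J v) :
    CutBetween G s v t := by
  obtain ⟨j, hj, hjt⟩ : ∃ j ∈ J, ¬ CutBetween G t v j := by simpa [branch] using ht
  exact ((hs j hj).left_or_right t).resolve_right hjt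

theorem eq_of_adj_of_notMem_branch (hs : s ∈ branch G J v) (ht : t ∉ branch G J v)
    (hst : G.Adj s t) : s = v :=
  ((cutBetween_of_mem_branch hs ht).eq_or_eq_of_adj hst).elim Eq.symm
    fun hvt => absurd (hvt ▸ self_mem_branch G J v) ht

theorem mem_branch_of_mem_branch {w : V} (hs : s ∈ branch G J v) (hv : v ∈ branch G J w) :
    s ∈ branch G J w :=
  fun j hj => (hs j hj).trans_right (hv j hj)

theorem mem_branch_of_cutBetween (hG : G.Connected) (hs : s ∈ branch G J v)
    (h : CutBetween G s t v) : t ∈ branch G J v := by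
  by_contra ht
  exact ht (h.antisymm_right hG (cutBetween_of_mem_branch hs ht) ▸ self_mem_branch G J v)

theorem eq_of_cutBetween_of_notMem_branch (hG : G.Connected) (hs : s ∉ branch G J v)
    (ht : t ∈ branch G J v) (h : CutBetween G s t v) : t = v :=
  h.antisymm_right hG (cutBetween_of_mem_branch ht hs).symm

end Branch

/-- The graph-theoretic shape of a two-voter rule `g` of the peaks: crossing an edge with one vote
changes the outcome only if the outcome follows that vote. -/
structure GatedRule {V : Type*} (G : SimpleGraph V) (g : V → V → V) : Prop where
  connected : G.Connected
  unanimous : ∀ x, g x x = x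
  adj_left : ∀ ⦃x y⦄, G.Adj x y → ∀ z, g x z = g y z ∨ (g x z = x ∧ g y z = y)
  adj_right : ∀ ⦃x y⦄, G.Adj x y → ∀ z, g z x = g z y ∨ (g z x = x ∧ g z y = y)
  idem_left : ∀ x z, g (g x z) z = g x z
  idem_right : ∀ x z, g z (g z x) = g z x

/-- The dictatorial zone of the first voter: the votes by which she imposes that very outcome. -/
def dictatorZone {V : Type*} (g : V → V → V) : Set V := {x | ∀ z, g x z = x}

namespace GatedRule

variable {V : Type*} {G : SimpleGraph V} {g : V → V → V} {p q s t u v w x y z : V}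

theorem flip (h : GatedRule G g) : GatedRule G (flip g) where
  connected := h.connected
  unanimous := h.unanimous
  adj_left := h.adj_right
  adj_right := h.adj_left
  idem_left := h.idem_right
  idem_right := h.idem_left

theorem cutBetween_left (h : GatedRule G g) (x : V) (ht : g t z = t) :
    CutBetween G x (g x z) t := by
  intro p
  induction p with
  | nil => simp [ht]
  | @cons x y t hxy p ih =>
    rcases h.adj_left hxy z with hz | ⟨hz, -⟩
    · exact List.mem_cons_of_mem _ (hz ▸ ih ht)
    · simp [hz]

theorem cutBetween_right (h : GatedRule G g) (x : V) (ht : g z t = t) :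
    CutBetween G x (g z x) t :=
  h.flip.cutBetween_left x ht

theorem fixed_left_of_cutBetween (h : GatedRule G g) (hs : g s z = s) (ht : g t z = t)
    (hv : CutBetween G s v t) : g v z = v :=
  CutBetween.eq_of_between h.connected hv (h.cutBetween_left v hs).symm
    (h.cutBetween_left v ht).symm

theorem fixed_right_of_cutBetween (h : GatedRule G g) (hs : g z s = s) (ht : g z t = t)
    (hv : CutBetween G s v t) : g z v = v :=
  h.flip.fixed_left_of_cutBetween hs ht hv

theorem mem_zone_of_fixed (h : GatedRule G g) (hw : w ∈ dictatorZone g) (ht : g t w = t) :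
    t ∈ dictatorZone g := fun s => by
  have hts := h.idem_right s t
  have hcut := h.cutBetween_right w hts
  rw [ht] at hcut
  exact hts.symm.trans (h.fixed_left_of_cutBetween (hw (g t s)) (h.unanimous _) hcut)

theorem root_mem_zone (h : GatedRule G g) (hw : w ∈ dictatorZone g) (x : V) :
    g x w ∈ dictatorZone g :=
  h.mem_zone_of_fixed hw (h.idem_left x w)

theorem mem_branch_root (h : GatedRule G g) (x z : V) : x ∈ branch G (dictatorZone g) (g x z) :=
  fun _ hj => h.cutBetween_left x (hj z)

theorem mem_zone_of_cutBetween (h : GatedRule G g) (hs : s ∈ dictatorZone g)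
    (ht : t ∈ dictatorZone g) (hv : CutBetween G s v t) : v ∈ dictatorZone g :=
  fun z => h.fixed_left_of_cutBetween (hs z) (ht z) hv

theorem mem_zone_of_adj (h : GatedRule G g) (hxy : G.Adj x y) (hx : g x y = x) (hy : g y x = y) :
    x ∈ dictatorZone g := by
  intro z
  by_contra hne
  set t := g x z
  have hxt : g x t = t := h.idem_right z x
  have hyt : g y t = t :=
    (h.adj_left hxy t).elim (fun e => e ▸ hxt) fun e => absurd (hxt.symm.trans e.1) hne
  have hyxt : CutBetween G y x t := hx ▸ h.cutBetween_right y hxt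
  have hxyt : CutBetween G x y t := hy ▸ h.cutBetween_right x hyt
  exact hxy.ne (hyxt.antisymm_left h.connected hxyt)

theorem adj_trichotomy (h : GatedRule G g) (hxy : G.Adj x y) :
    (x ∈ dictatorZone g ∧ y ∈ dictatorZone g) ∨ x ∈ branch G (dictatorZone g) y ∨
      y ∈ branch G (dictatorZone g) x := by
  have apply_adj {x y : V} (hxy : G.Adj x y) : g x y = y ∨ g x y = x :=
    (h.adj_left hxy y).imp (·.trans (h.unanimous y)) And.left
  rcases apply_adj hxy with hx | hx
  · exact .inr (.inl (hx ▸ h.mem_branch_root x y))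
  rcases apply_adj hxy.symm with hy | hy
  · exact .inr (.inr (hy ▸ h.mem_branch_root y x))
  · exact .inl ⟨h.mem_zone_of_adj hxy hx hy, h.mem_zone_of_adj hxy.symm hy hx⟩

theorem apply_left_of_mem_branch (h : GatedRule G g) (hne : (dictatorZone g).Nonempty)
    (hx : x ∈ branch G (dictatorZone g) v) : g x v = v := by
  obtain ⟨w, hw⟩ := hne
  by_cases ht : g x v ∈ branch G (dictatorZone g) v
  · set t := g x v
    have hvt : CutBetween G v t (g t w) := by
      simpa only [show g t v = t from h.idem_left x v] using
        h.cutBetween_right v (h.idem_right w t)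
    exact hvt.antisymm_left h.connected (ht _ (h.root_mem_zone hw t))
  · exact (h.cutBetween_left x (h.unanimous v)).antisymm_right h.connected
      (cutBetween_of_mem_branch hx ht)

theorem apply_right_of_mem_branch (h : GatedRule G g) (hne : (dictatorZone g).Nonempty)
    (hx : x ∈ branch G (dictatorZone g) v) : g v x = v := by
  obtain ⟨w, hw⟩ := hne
  by_cases ht : g v x ∈ branch G (dictatorZone g) v
  · set t := g v x
    have hvt : CutBetween G v t w := by
      simpa only [show g v t = t from h.idem_right x v] using h.cutBetween_left v (hw t)
    exact hvt.antisymm_left h.connected (ht w hw)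
  · exact (h.cutBetween_right x (h.unanimous v)).antisymm_right h.connected
      (cutBetween_of_mem_branch hx ht)

theorem mem_zone_of_apply_ne (h : GatedRule G g) (hne : g q (g p q) ≠ g p q) :
    g p q ∈ dictatorZone g := by
  intro z
  by_contra hz
  set c := g p q
  set t := g p (g c z)
  have hpc : g p c = c := h.idem_right q p
  have hct : g c t = t := h.fixed_right_of_cutBetween (h.idem_right z c) (h.unanimous c)
    (h.cutBetween_right (g c z) hpc)
  have htc : t ≠ c := fun e => by
    have := h.idem_left p (g c z)
    rw [show g p (g c z) = c from e, h.idem_right z c] at this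
    exact hz this
  have hqct : CutBetween G q c t := by
    simpa only [show g c q = c from h.idem_left p q] using h.cutBetween_right q hct
  rcases hqct.left_or_right (g q t) with hcut | hcut
  · exact hne (h.fixed_right_of_cutBetween (h.unanimous q) (h.idem_right t q) hcut)
  · exact htc (hct.symm.trans (h.fixed_left_of_cutBetween (h.idem_left q t) (h.unanimous t) hcut))

end GatedRule

/-! ### Trees having the dictatorial zone as a path -/

/-- The graph joining every vertex other than the root `r` to its parent `π x`. -/
def parentGraph {V : Type*} (π : V → V) (r : V) : SimpleGraph V :=
  SimpleGraph.fromRel fun x y => x ≠ r ∧ π x = y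

theorem parentGraph_isTree {V : Type*} [Finite V] {π : V → V} {height : V → ℕ} {r : V}
    (hπ : ∀ x, x ≠ r → height (π x) < height x) : (parentGraph π r).IsTree := by
  have reach_root (x : V) : (parentGraph π r).Reachable x r := by
    induction hx : height x using Nat.strong_induction_on generalizing x with
    | _ n ih =>
      by_cases hxr : x = r
      · rw [hxr]
      have hlt := hπ x hxr
      have hadj : (parentGraph π r).Adj x (π x) := by
        rw [parentGraph, SimpleGraph.fromRel_adj]
        exact ⟨fun e => hlt.ne' (congrArg height e), .inl ⟨hxr, rfl⟩⟩
      exact hadj.reachable.trans (ih _ (hx ▸ hlt) _ rfl)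
  have hconn : (parentGraph π r).Connected :=
    (SimpleGraph.connected_iff _).2 ⟨fun x y => (reach_root x).trans (reach_root y).symm, ⟨r⟩⟩
  have hedge : (parentGraph π r).edgeSet ⊆ (fun x => s(x, π x)) '' ({r}ᶜ : Set V) := by
    intro e he
    induction e using Sym2.ind with
    | _ x y =>
      rw [SimpleGraph.mem_edgeSet, parentGraph, SimpleGraph.fromRel_adj] at he
      rcases he.2 with ⟨hx, rfl⟩ | ⟨hy, rfl⟩
      · exact ⟨x, hx, rfl⟩
      · exact ⟨y, hy, Sym2.eq_swap⟩
  have hcard : (parentGraph π r).edgeSet.ncard ≤ ({r}ᶜ : Set V).ncard :=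
    (Set.ncard_le_ncard hedge (Set.toFinite _)).trans (Set.ncard_image_le (Set.toFinite _))
  have hcompl := Set.ncard_add_ncard_compl ({r} : Set V)
  have hle := hconn.card_vert_le_card_edgeSet_add_one
  rw [SimpleGraph.isTree_iff_connected_and_card]
  refine ⟨hconn, ?_⟩
  rw [Set.ncard_singleton] at hcompl
  rw [Nat.card_coe_set_eq] at *
  omega

theorem exists_bijOn_Iic {V : Type*} {Z : Set V} (hZ : Z.Finite) {a b : V} (ha : a ∈ Z)
    (hb : b ∈ Z) (hab : a ≠ b) :
    ∃ (n : ℕ) (idx : V → ℕ), Set.BijOn idx Z (Set.Iic n) ∧ idx a = 0 ∧ idx b = n := by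
  set k := (Z \ {a, b}).ncard with hk
  obtain ⟨e, he⟩ : ∃ e : V → ℕ, Set.BijOn e (Z \ {a, b}) (Set.Ioo 0 (k + 1)) := by
    have hfin : (Z \ {a, b}).Finite := hZ.sdiff
    refine hfin.exists_bijOn_of_encard_eq ?_
    rw [← hfin.cast_ncard_eq, ← (Set.finite_Ioo 0 (k + 1)).cast_ncard_eq, ← hk,
      ← Finset.coe_Ioo, Set.ncard_coe_finset]
    simp
  let idx (x : V) : ℕ := if x = a then 0 else if x = b then k + 1 else e x
  have hidx : Set.BijOn idx (Z \ {a, b}) (Set.Ioo 0 (k + 1)) := he.congr fun x hx => by grind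
  have ha' : idx a = 0 := if_pos rfl
  have hb' : idx b = k + 1 := by grind
  have hZ' : Z = insert b (insert a (Z \ {a, b})) := by grind
  have hI : Set.Iic (k + 1) = insert (idx b) (insert (idx a) (Set.Ioo 0 (k + 1))) := by grind
  refine ⟨k + 1, idx, ?_, ha', hb'⟩
  rw [hZ', hI]
  exact (hidx.insert (by grind)).insert (by grind)

namespace GatedRule

variable {V : Type*} {G T : SimpleGraph V} {g : V → V → V} {a b v w x y z : V}

theorem root_eq_of_mem_branch (h : GatedRule G g) (ha : a ∈ dictatorZone g)
    (hv : v ∈ dictatorZone g) (hx : x ∈ branch G (dictatorZone g) v) : g x a = v :=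
  (h.mem_branch_root x a v hv).antisymm_right h.connected (hx _ (h.root_mem_zone ha x))

theorem exists_parent (h : GatedRule G g) (ha : a ∈ dictatorZone g) (hx : x ∉ dictatorZone g) :
    ∃ y, G.Adj x y ∧ x ∈ branch G (dictatorZone g) y := by
  obtain ⟨p⟩ := h.connected.preconnected x a
  have haS : a ∉ branch G (dictatorZone g) x := fun hax => hx (eq_of_mem_branch_of_mem hax ha ▸ ha)
  obtain ⟨d, -, hd, hd'⟩ := p.exists_boundary_dart _ (self_mem_branch G _ x) haS
  have hxd : G.Adj x d.snd := eq_of_adj_of_notMem_branch hd hd' d.adj ▸ d.adj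
  rcases h.adj_trichotomy hxd with hzone | hbranch | hbranch
  · exact absurd hzone.1 hx
  · exact ⟨d.snd, hxd, hbranch⟩
  · exact absurd hbranch hd'

theorem cutBetween_of_mem_branch_of_adj
    (hT : ∀ ⦃x y⦄, T.Adj x y → G.Adj x y ∨ (x ∈ dictatorZone g ∧ y ∈ dictatorZone g))
    (hx : x ∈ branch G (dictatorZone g) v) (hy : y ∉ branch G (dictatorZone g) v) :
    CutBetween T x v y :=
  .of_unique_exit (fun _ hs _ ht hst => (hT hst).elim (eq_of_adj_of_notMem_branch hs ht)
    fun hzone => eq_of_mem_branch_of_mem hs hzone.1) hx hy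

theorem exists_parentMap (h : GatedRule G g) {n : ℕ} {idx : V → ℕ}
    (hidx : Set.BijOn idx (dictatorZone g) (Set.Iic n)) (ha : a ∈ dictatorZone g)
    (ha' : idx a = 0) :
    ∃ π : V → V,
      (∀ x ∈ dictatorZone g, x ≠ a → π x ∈ dictatorZone g ∧ idx (π x) + 1 = idx x) ∧
      ∀ x ∉ dictatorZone g, G.Adj x (π x) ∧ x ∈ branch G (dictatorZone g) (π x) := by
  have hπ (x : V) : ∃ y, (x ∈ dictatorZone g → x ≠ a → y ∈ dictatorZone g ∧ idx y + 1 = idx x) ∧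
      (x ∉ dictatorZone g → G.Adj x y ∧ x ∈ branch G (dictatorZone g) y) := by
    by_cases hx : x ∈ dictatorZone g
    · obtain ⟨y, hy, hyx⟩ := hidx.surjOn
        (show idx x - 1 ∈ Set.Iic n from (Nat.sub_le _ _).trans (hidx.mapsTo hx))
      refine ⟨y, fun _ hxa => ⟨hy, ?_⟩, fun hx' => absurd hx hx'⟩
      have hne : idx x ≠ 0 := fun e => hxa (hidx.injOn hx ha (e.trans ha'.symm))
      omega
    · obtain ⟨y, hy⟩ := h.exists_parent ha hx
      exact ⟨y, fun hx' => absurd hx' hx, fun _ => hy⟩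
  choose π hin hout using hπ
  exact ⟨π, hin, hout⟩

end GatedRule

/-- `T` is a tree whose path from `a` to `b` is the dictatorial zone of `g`, off which it follows
`G`, and only `a` and `b` carry alternatives outside the zone. On such a tree `g` turns out to be
the `(a, b)`-hybrid rule. -/
structure ZoneTree {V : Type*} (G : SimpleGraph V) (g : V → V → V) (T : SimpleGraph V)
    (a b : V) : Prop where
  rule : GatedRule G g
  isTree : T.IsTree
  adj : ∀ ⦃x y⦄, T.Adj x y → G.Adj x y ∨ (x ∈ dictatorZone g ∧ y ∈ dictatorZone g)
  between_iff : ∀ z, CutBetween T a z b ↔ z ∈ dictatorZone g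
  ne : a ≠ b
  eq_of_mem_branch : ∀ v ∈ dictatorZone g, v ≠ a → v ≠ b →
    ∀ x ∈ branch G (dictatorZone g) v, x = v

namespace GatedRule

variable {V : Type*} {G T : SimpleGraph V} {g : V → V → V} {a b v w x y z : V}

theorem mem_zone_of_cutBetween_of_adj (h : GatedRule G g) (hconn : T.Connected)
    (hT : ∀ ⦃x y⦄, T.Adj x y → G.Adj x y ∨ (x ∈ dictatorZone g ∧ y ∈ dictatorZone g))
    (ha : a ∈ dictatorZone g) (hb : b ∈ dictatorZone g) (hz : CutBetween T a z b) :
    z ∈ dictatorZone g := by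
  have hroot (w : V) (hw : w ∈ dictatorZone g) : CutBetween T w (g z a) z := by
    by_cases hwS : w ∈ branch G (dictatorZone g) (g z a)
    · exact eq_of_mem_branch_of_mem hwS hw ▸ .left w z
    · exact (cutBetween_of_mem_branch_of_adj hT (h.mem_branch_root z a) hwS).symm
  exact CutBetween.eq_of_between hconn hz (hroot a ha) (hroot b hb) ▸ h.root_mem_zone ha z

/-- The zone vertices up to `z` in the enumeration, with their branches, can only be left through
`z`. -/
theorem cutBetween_of_idx {n : ℕ} {idx : V → ℕ}
    (hidx : Set.BijOn idx (dictatorZone g) (Set.Iic n)) (ha : a ∈ dictatorZone g)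
    (hb : b ∈ dictatorZone g) (ha' : idx a = 0) (hb' : idx b = n)
    (hT : ∀ ⦃x y⦄, T.Adj x y → g x a = g y a ∨
      (x ∈ dictatorZone g ∧ y ∈ dictatorZone g ∧ idx y ≤ idx x + 1))
    (hz : z ∈ dictatorZone g) : CutBetween T a z b := by
  by_cases hzb : z = b
  · exact hzb ▸ .right a z
  refine .of_unique_exit (S := {x | idx (g x a) ≤ idx z}) (fun s hs t ht hst => ?_) ?_ fun hbS => ?_
  · rw [Set.mem_ofPred_eq] at hs ht
    rcases hT hst with hroot | ⟨hs', ht', hle⟩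
    · exact absurd (hroot ▸ hs) ht
    · rw [hs' a] at hs
      rw [ht' a] at ht
      exact hidx.injOn hs' hz (by omega)
  · simp [ha a, ha']
  · rw [Set.mem_ofPred_eq, hb a] at hbS
    have hzn : idx z ≤ n := hidx.mapsTo hz
    exact hzb (hidx.injOn hz hb (by omega))

theorem exists_zoneTree [Finite V] (h : GatedRule G g) (ha : a ∈ dictatorZone g)
    (hb : b ∈ dictatorZone g) (hab : a ≠ b)
    (hbranch : ∀ v ∈ dictatorZone g, v ≠ a → v ≠ b →
      ∀ x ∈ branch G (dictatorZone g) v, x = v) :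
    ∃ T, ZoneTree G g T a b := by
  obtain ⟨n, idx, hidx, ha', hb'⟩ := exists_bijOn_Iic (Set.toFinite (dictatorZone g)) ha hb hab
  obtain ⟨π, hin, hout⟩ := h.exists_parentMap hidx ha ha'
  have root_parent (x : V) (hx : x ∉ dictatorZone g) : g x a = g (π x) a :=
    h.root_eq_of_mem_branch ha (h.root_mem_zone ha _)
      (mem_branch_of_mem_branch (hout x hx).2 (h.mem_branch_root (π x) a))
  have htree : (parentGraph π a).IsTree := by
    refine parentGraph_isTree (height := fun x => idx (g x a) + G.dist x (g x a)) fun x hxa => ?_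
    by_cases hx : x ∈ dictatorZone g
    · obtain ⟨hπx, hlt⟩ := hin x hx hxa
      simp only [hx a, hπx a, SimpleGraph.dist_self]
      omega
    · have hdist := ((hout x hx).2 _ (h.root_mem_zone ha x)).dist_add_dist h.connected
      rw [SimpleGraph.dist_eq_one_iff_adj.2 (hout x hx).1] at hdist
      simp only [← root_parent x hx]
      omega
  have parent_adj (x : V) (hxa : x ≠ a) : (G.Adj x (π x) ∧ g x a = g (π x) a) ∨
      (x ∈ dictatorZone g ∧ π x ∈ dictatorZone g ∧ idx (π x) + 1 = idx x) := by
    by_cases hx : x ∈ dictatorZone g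
    · exact .inr ⟨hx, hin x hx hxa⟩
    · exact .inl ⟨(hout x hx).1, root_parent x hx⟩
  have adj_cases (x y : V) (hxy : (parentGraph π a).Adj x y) : (G.Adj x y ∧ g x a = g y a) ∨
      (x ∈ dictatorZone g ∧ y ∈ dictatorZone g ∧ idx y ≤ idx x + 1) := by
    rw [parentGraph, SimpleGraph.fromRel_adj] at hxy
    rcases hxy.2 with ⟨hxa, rfl⟩ | ⟨hya, rfl⟩
    · exact (parent_adj x hxa).imp_right fun ⟨hx, hy, heq⟩ => ⟨hx, hy, heq ▸ by omega⟩
    · exact (parent_adj y hya).imp (fun ⟨hadj, hroot⟩ => ⟨hadj.symm, hroot.symm⟩)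
        fun ⟨hy, hx, hlt⟩ => ⟨hx, hy, hlt.ge⟩
  have hadj (x y : V) (hxy : (parentGraph π a).Adj x y) :
      G.Adj x y ∨ (x ∈ dictatorZone g ∧ y ∈ dictatorZone g) :=
    (adj_cases x y hxy).imp And.left fun hzone => ⟨hzone.1, hzone.2.1⟩
  refine ⟨parentGraph π a, h, htree, hadj, fun z => ⟨?_, fun hz => ?_⟩, hab, hbranch⟩
  · exact h.mem_zone_of_cutBetween_of_adj htree.1 hadj ha hb
  · exact cutBetween_of_idx hidx ha hb ha' hb'
      (fun x y hxy => (adj_cases x y hxy).imp_left And.right) hz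

end GatedRule

namespace ZoneTree

variable {V : Type*} {G T : SimpleGraph V} {g : V → V → V} {a b e v w x y z : V}

theorem symm (h : ZoneTree G g T a b) : ZoneTree G g T b a where
  rule := h.rule
  isTree := h.isTree
  adj := h.adj
  between_iff z := ⟨fun hz => (h.between_iff z).1 hz.symm, fun hz => ((h.between_iff z).2 hz).symm⟩
  ne := h.ne.symm
  eq_of_mem_branch v hv hvb hva := h.eq_of_mem_branch v hv hva hvb

theorem left_mem_zone (h : ZoneTree G g T a b) : a ∈ dictatorZone g :=
  (h.between_iff a).1 (.left a b)

theorem cutBetween_root (h : ZoneTree G g T a b) (x : V) (hw : w ∈ dictatorZone g) :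
    CutBetween T x (g x a) w := by
  by_cases hwS : w ∈ branch G (dictatorZone g) (g x a)
  · exact eq_of_mem_branch_of_mem hwS hw ▸ .right x w
  · exact GatedRule.cutBetween_of_mem_branch_of_adj h.adj (h.rule.mem_branch_root x a) hwS

theorem cutBetween_iff_mem_branch (h : ZoneTree G g T a b) :
    CutBetween T x a b ↔ x ∈ branch G (dictatorZone g) a := by
  refine ⟨fun hx => ?_, fun hx => ?_⟩
  · have hroot : g x a = a := CutBetween.eq_of_between h.isTree.1 hx
      (h.cutBetween_root x h.left_mem_zone)
      ((h.between_iff _).2 (h.rule.root_mem_zone h.left_mem_zone x)).symm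
    exact hroot ▸ h.rule.mem_branch_root x a
  · exact GatedRule.cutBetween_of_mem_branch_of_adj h.adj hx fun hb =>
      h.ne (eq_of_mem_branch_of_mem hb h.symm.left_mem_zone).symm

theorem cutBetween_of_notMem_zone (h : ZoneTree G g T a b) (he : e ∉ dictatorZone g)
    (hxy : CutBetween G x e y) : CutBetween T x e y :=
  hxy.of_invariant (S := Set.univ) (fun _ _ hs _ ht hst => ⟨trivial, fun hcut =>
    (h.adj hst).elim (fun hadj => (hcut.eq_or_eq_of_adj hadj).elim (hs ·.symm) (ht ·.symm))
      fun hzone => he (h.rule.mem_zone_of_cutBetween hzone.1 hzone.2 hcut)⟩) trivial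

theorem cutBetween_of_mem_branch (h : ZoneTree G g T a b) (hx : x ∈ branch G (dictatorZone g) a)
    (hxy : CutBetween G x a y) : CutBetween T x a y :=
  hxy.of_invariant (fun s hs hsa t hta hst => by
    have hadj : G.Adj s t := (h.adj hst).resolve_right fun hzone =>
      hsa (eq_of_mem_branch_of_mem hs hzone.1)
    exact ⟨by_contra fun ht => hsa (eq_of_adj_of_notMem_branch hs ht hadj), fun hcut =>
      (hcut.eq_or_eq_of_adj hadj).elim (hsa ·.symm) (hta ·.symm)⟩) hx

theorem median_apply (h : ZoneTree G g T a b) (hx : CutBetween T x a b) (y : V) :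
    CutBetween T x (g x y) y ∧ CutBetween T x (g x y) a ∧ CutBetween T y (g x y) a := by
  have ha := h.left_mem_zone
  rw [h.cutBetween_iff_mem_branch] at hx
  have hxy : CutBetween G x (g x y) y := h.rule.cutBetween_left x (h.rule.unanimous y)
  by_cases he : g x y ∈ dictatorZone g
  · have hea : g x y = a :=
      (h.rule.root_eq_of_mem_branch ha he (h.rule.mem_branch_root x y)).symm.trans
        (h.rule.root_eq_of_mem_branch ha ha hx)
    rw [hea] at hxy ⊢
    exact ⟨h.cutBetween_of_mem_branch hx hxy, .right x a, .right y a⟩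
  · exact ⟨h.cutBetween_of_notMem_zone he hxy,
      h.cutBetween_of_notMem_zone he (h.rule.cutBetween_left x (ha y)),
      h.cutBetween_of_notMem_zone he
        (h.rule.cutBetween_right y (h.rule.apply_left_of_mem_branch ⟨a, ha⟩ hx))⟩

theorem root_eq_left_or_right (h : ZoneTree G g T a b) (hx : x ∉ dictatorZone g) :
    g x a = a ∨ g x a = b := by
  by_contra! hne
  have hmem := h.rule.root_mem_zone h.left_mem_zone x
  exact hx (h.eq_of_mem_branch _ hmem hne.1 hne.2 x (h.rule.mem_branch_root x a) ▸ hmem)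

end ZoneTree

/-! ### Preferences and rules of the peaks -/

section Preferences

variable {V : Type*} [Fintype V] {P P' : Pref V} {x y : V}

theorem prefers_of_le_of_ne (h : P.symm x ≤ P.symm y) (hne : x ≠ y) : prefers P x y :=
  h.lt_of_ne fun e => hne (P.symm.injective e)

theorem Reversed.symm_le (h : Reversed P P') (hxy : P.symm x ≤ P.symm y) :
    P'.symm y ≤ P'.symm x :=
  not_lt.1 fun hlt => hxy.not_gt ((h y x).2 hlt)

variable [Nonempty V] {D : Set (Pref V)}

theorem rk_symm (P : Pref V) (x : V) : rk P (P.symm x) = x := by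
  simp [rk]

theorem symm_eq_of_rk_eq {k : ℕ} (hk : k < Fintype.card V)
    (h : rk P k = x) : (P.symm x : ℕ) = k := by
  subst h
  simp [rk, hk]

theorem symm_peak_le (P : Pref V) (x : V) : P.symm (peak P) ≤ P.symm x :=
  Fin.le_def.2 ((symm_eq_of_rk_eq Fintype.card_pos rfl).trans_le (Nat.zero_le _))

theorem eq_peak_of_symm_le (h : P.symm x ≤ P.symm (peak P)) : x = peak P :=
  P.symm.injective (h.antisymm (symm_peak_le P x))

theorem DomAdjacent.exists_prefs (h : DomAdjacent D x y)
    (hxy : x ≠ y) :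
    ∃ P ∈ D, ∃ P' ∈ D, peak P = x ∧ peak P' = y ∧
      ∀ u v, P.symm u ≤ P.symm v → P'.symm v ≤ P'.symm u → u = v ∨ (u = x ∧ v = y) := by
  obtain ⟨P, hP, P', hP', hPx, hPy, hP'y, hP'x, hrest⟩ := h
  have hcard : 1 < Fintype.card V := Fintype.one_lt_card_iff.2 ⟨x, y, hxy⟩
  have symm_eq (w : V) : w = x ∨ w = y ∨ ((P.symm w : ℕ) = P'.symm w ∧ 2 ≤ (P.symm w : ℕ)) := by
    have hw := rk_symm P w
    by_cases hle : 2 ≤ (P.symm w : ℕ)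
    · exact .inr (.inr
        ⟨(symm_eq_of_rk_eq (P.symm w).2 ((hrest _ hle).symm.trans hw)).symm, hle⟩)
    · interval_cases (P.symm w : ℕ)
      · exact .inl (hw.symm.trans hPx)
      · exact .inr (.inl (hw.symm.trans hPy))
  have hxP := symm_eq_of_rk_eq (by omega) hPx
  have hyP := symm_eq_of_rk_eq (by omega) hPy
  have hyP' := symm_eq_of_rk_eq (by omega) hP'y
  have hxP' := symm_eq_of_rk_eq (by omega) hP'x
  refine ⟨P, hP, P', hP', hPx, hP'y, fun u v huv hvu => ?_⟩
  rw [Fin.le_def] at huv hvu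
  have hinj (hsymm : (P.symm u : ℕ) = P.symm v) : u = v := P.symm.injective (Fin.ext hsymm)
  rcases symm_eq u with rfl | rfl | hu <;> rcases symm_eq v with rfl | rfl | hv <;> grind

theorem minimallyRich_of_connected (hconn : (adjGraph D).Connected)
    (hD : D.Nonempty) : MinimallyRich D := by
  intro x
  rcases subsingleton_or_nontrivial V with _ | _
  · exact hD.imp fun P hP => ⟨hP, Subsingleton.elim _ _⟩
  · obtain ⟨y, hxy⟩ := hconn.preconnected.exists_adj_of_nontrivial x
    rw [adjGraph, SimpleGraph.fromRel_adj] at hxy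
    rcases hxy.2 with ⟨P, hP, -, -, hPx, -⟩ | ⟨-, -, P, hP, -, -, hPx, -⟩
    · exact ⟨P, hP, hPx⟩
    · exact ⟨P, hP, hPx⟩

end Preferences

/-- A unanimous strategy-proof two-voter rule on `D`, as the function `g` of the peaks that a
tops-only rule amounts to, together with the standing assumptions on the domain. -/
structure PeakRule {V : Type*} [Fintype V] [Nonempty V] (D : Set (Pref V)) (g : V → V → V) :
    Prop where
  connected : (adjGraph D).Connected
  rich : MinimallyRich D
  unanimous : ∀ x, g x x = x
  strategyProof_left : ∀ P ∈ D, ∀ x y, P.symm (g (peak P) y) ≤ P.symm (g x y)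
  strategyProof_right : ∀ P ∈ D, ∀ x y, P.symm (g x (peak P)) ≤ P.symm (g x y)

namespace PeakRule

variable {V : Type*} [Fintype V] [Nonempty V] {D : Set (Pref V)} {g : V → V → V}
  {P Q : Pref V} {c e v w : V}

theorem flip (h : PeakRule D g) : PeakRule D (flip g) where
  connected := h.connected
  rich := h.rich
  unanimous := h.unanimous
  strategyProof_left P hP x y := h.strategyProof_right P hP y x
  strategyProof_right P hP x y := h.strategyProof_left P hP y x

theorem adj_left (h : PeakRule D g) {x y : V} (hxy : (adjGraph D).Adj x y) (z : V) :
    g x z = g y z ∨ (g x z = x ∧ g y z = y) := by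
  have of_domAdjacent {x y : V} (hne : x ≠ y) (hadj : DomAdjacent D x y) :
      g x z = g y z ∨ (g x z = x ∧ g y z = y) := by
    obtain ⟨P, hP, P', hP', rfl, rfl, heq⟩ := hadj.exists_prefs hne
    exact heq _ _ (h.strategyProof_left P hP _ z) (h.strategyProof_left P' hP' _ z)
  rw [adjGraph, SimpleGraph.fromRel_adj] at hxy
  exact hxy.2.elim (of_domAdjacent hxy.1) fun hyx =>
    (of_domAdjacent hxy.1.symm hyx).imp Eq.symm And.symm

theorem idem_left (h : PeakRule D g) (x z : V) : g (g x z) z = g x z := by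
  obtain ⟨P, hP, hpeak⟩ := h.rich (g x z)
  rw [← hpeak]
  exact eq_peak_of_symm_le (by simpa only [← hpeak] using h.strategyProof_left P hP x z)

theorem gated (h : PeakRule D g) : GatedRule (adjGraph D) g where
  connected := h.connected
  unanimous := h.unanimous
  adj_left _ _ := h.adj_left
  adj_right _ _ := h.flip.adj_left
  idem_left := h.idem_left
  idem_right x z := h.flip.idem_left x z

theorem symm_le_of_apply_eq (h : PeakRule D g) {J : Set V} (hP : P ∈ D)
    (hx : peak P ∉ branch (adjGraph D) J w) (he : e ∈ branch (adjGraph D) J w)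
    (hxw : g (peak P) w = w) (hwe : g w e = w) : P.symm w ≤ P.symm e := by
  have hew : CutBetween (adjGraph D) e (g (peak P) e) w := h.gated.cutBetween_right e hxw
  have hm : g (peak P) e = w := eq_of_cutBetween_of_notMem_branch h.connected hx
    (mem_branch_of_cutBetween h.connected he hew) (h.gated.cutBetween_left (peak P) hwe)
  simpa only [hm, h.unanimous] using h.strategyProof_left P hP e e

theorem symm_le_of_mem_branch (h : PeakRule D g) (hP : P ∈ D) (hw : w ∈ dictatorZone g)
    (hx : peak P ∉ branch (adjGraph D) (dictatorZone g) w)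
    (he : e ∈ branch (adjGraph D) (dictatorZone g) w) : P.symm w ≤ P.symm e :=
  h.flip.symm_le_of_apply_eq hP hx he (hw (peak P))
    (h.gated.apply_left_of_mem_branch ⟨w, hw⟩ he)

theorem symm_le_of_notMem_branch (h : PeakRule D g) (hne : (dictatorZone g).Nonempty)
    (hP : P ∈ D) (hx : peak P ∈ branch (adjGraph D) (dictatorZone g) v)
    (hc : c ∉ branch (adjGraph D) (dictatorZone g) v) : P.symm v ≤ P.symm c := by
  set x := peak P with hxP
  have hG := h.gated
  have hxv : g x v = v := hG.apply_left_of_mem_branch hne hx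
  have hec : P.symm (g x c) ≤ P.symm c := by
    simpa only [h.unanimous] using h.strategyProof_left P hP c c
  refine le_trans ?_ hec
  have hce : CutBetween (adjGraph D) c (g x c) v := hG.cutBetween_right c hxv
  have hxe : g x (g x c) = g x c := hG.idem_right c x
  set e := g x c
  by_cases he : e ∈ branch (adjGraph D) (dictatorZone g) v
  · rw [eq_of_cutBetween_of_notMem_branch h.connected hc he hce]
  have hve : g v e = e := by
    have hcut : CutBetween (adjGraph D) x e (g v e) := by
      simpa only [hxe] using hG.cutBetween_left x (hG.idem_left v e)
    have hxve := cutBetween_of_mem_branch hx he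
    exact (hG.cutBetween_left v (h.unanimous e)).antisymm_right h.connected
      ((hcut.left_or_right v).resolve_left fun hxev =>
        he (hxev.antisymm_right h.connected hxve ▸ self_mem_branch _ _ _))
  simpa only [hve, ← hxP, hG.apply_right_of_mem_branch hne hx] using
    h.strategyProof_right P hP v e

theorem mem_zone_of_lt (h : PeakRule D g) (hP : P ∈ D)
    (hlt : P.symm (g (peak P) (peak Q)) < P.symm (g (peak Q) (peak P))) :
    g (peak P) (peak Q) ∈ dictatorZone g :=
  h.gated.mem_zone_of_apply_ne fun heq => hlt.not_ge <| by
    simpa only [heq] using h.strategyProof_right P hP (peak Q) (g (peak P) (peak Q))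

end PeakRule

/-! ### Invariance and mixtures of rules -/

/-- The domain contains the completely reversed preferences `Pl` and `Pu`, and no rule of the peaks
is invariant with respect to them. -/
structure NoInvariantRule {V : Type*} [Fintype V] [Nonempty V] (D : Set (Pref V))
    (Pl Pu : Pref V) : Prop where
  left_mem : Pl ∈ D
  right_mem : Pu ∈ D
  reversed : Reversed Pl Pu
  apply_ne : ∀ g, PeakRule D g → g (peak Pl) (peak Pu) ≠ g (peak Pu) (peak Pl)

/-- The mixture of `f` and `h` that follows `f` when the first vote lies in `S`, and `h`
otherwise. -/
noncomputable def splice {V : Type*} (S : Set V) (f h : V → V → V) (x y : V) : V :=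
  if x ∈ S then f x y else h x y

/-- The mixture of `f` and `h` that follows `f` when both votes lie in `S` and `h` when neither
does, and elects `w` when `S` separates the votes. -/
noncomputable def glue {V : Type*} (S : Set V) (w : V) (f h : V → V → V) (x y : V) : V :=
  if x ∈ S then if y ∈ S then f x y else w else if y ∈ S then w else h x y

theorem flip_glue {V : Type*} (S : Set V) (w : V) (f h : V → V → V) :
    flip (glue S w f h) = glue S w (flip f) (flip h) := by
  funext x y
  simp only [flip, glue]
  split_ifs <;> rfl

theorem mem_dictatorZone_glue {V : Type*} {S : Set V} {w : V} {f : V → V → V} (hw : w ∈ S)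
    (hf : ∀ y ∈ S, f w y = w) (h : V → V → V) : w ∈ dictatorZone (glue S w f h) := fun y => by
  rw [glue, if_pos hw]
  split_ifs with hy
  · exact hf y hy
  · rfl

section Mixtures

variable {V : Type*} [Fintype V] [Nonempty V] {D : Set (Pref V)} {Pl Pu : Pref V}
  {P : Pref V}
  {f g h : V → V → V} {S : Set V} {a b w x y : V}

namespace NoInvariantRule

theorem mem_zone_or_mem_zone_flip (hN : NoInvariantRule D Pl Pu) (hg : PeakRule D g) :
    (g (peak Pl) (peak Pu) ∈ dictatorZone g ∧ g (peak Pu) (peak Pl) ∈ dictatorZone g) ∨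
      (g (peak Pl) (peak Pu) ∈ dictatorZone (flip g) ∧
        g (peak Pu) (peak Pl) ∈ dictatorZone (flip g)) := by
  have hne : Pl.symm (g (peak Pl) (peak Pu)) ≠ Pl.symm (g (peak Pu) (peak Pl)) :=
    Pl.symm.injective.ne (hN.apply_ne g hg)
  rcases lt_or_gt_of_ne hne with hlt | hlt
  · exact .inl ⟨hg.mem_zone_of_lt hN.left_mem hlt,
      hg.mem_zone_of_lt hN.right_mem ((hN.reversed _ _).1 hlt)⟩
  · exact .inr ⟨hg.flip.mem_zone_of_lt hN.right_mem ((hN.reversed _ _).1 hlt),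
      hg.flip.mem_zone_of_lt hN.left_mem hlt⟩

theorem mem_zone (hN : NoInvariantRule D Pl Pu) (hg : PeakRule D g)
    (hne : (dictatorZone g).Nonempty) :
    g (peak Pl) (peak Pu) ∈ dictatorZone g ∧ g (peak Pu) (peak Pl) ∈ dictatorZone g := by
  obtain ⟨w, hw⟩ := hne
  refine (hN.mem_zone_or_mem_zone_flip hg).resolve_right fun ⟨hl, hu⟩ => hN.apply_ne g hg ?_
  exact (hl w).symm.trans ((hw _).trans ((hw _).symm.trans (hu w)))

theorem notMem_zone_flip (hN : NoInvariantRule D Pl Pu) (hg : PeakRule D g)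
    (hw : w ∈ dictatorZone g) : w ∉ dictatorZone (_root_.flip g) := fun hw' => by
  obtain ⟨hl, hu⟩ := hN.mem_zone hg ⟨w, hw⟩
  exact hN.apply_ne g hg ((hl w).symm.trans ((hw' _).trans ((hw' _).symm.trans (hu w))))

end NoInvariantRule

namespace PeakRule

theorem symm_le_apply_of_notMem_branch (hf : PeakRule D f) (hh : PeakRule D h)
    (hne : (dictatorZone f).Nonempty) (hP : P ∈ D)
    (hp : peak P ∈ branch (adjGraph D) (dictatorZone f) w)
    (hx : x ∉ branch (adjGraph D) (dictatorZone f) w) (hwy : h w y = w) :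
    P.symm w ≤ P.symm (h x y) := by
  by_cases he : h x y ∈ branch (adjGraph D) (dictatorZone f) w
  · exact (congrArg P.symm (eq_of_cutBetween_of_notMem_branch hf.connected hx he
      (hh.gated.cutBetween_left x hwy))).ge
  · exact hf.symm_le_of_notMem_branch hne hP hp he

theorem splice (hf : PeakRule D f) (hh : PeakRule D h) (hwf : w ∈ dictatorZone f)
    (hwh : w ∈ dictatorZone h) :
    PeakRule D (splice (branch (adjGraph D) (dictatorZone f) w) f h) where
  connected := hf.connected
  rich := hf.rich
  unanimous x := by
    rw [_root_.splice, hf.unanimous, hh.unanimous, ite_self]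
  strategyProof_left P hP x y := by
    simp only [_root_.splice]
    split_ifs with hp hx hx
    · exact hf.strategyProof_left P hP x y
    · exact (hwf y ▸ hf.strategyProof_left P hP w y).trans
        (hf.symm_le_apply_of_notMem_branch hh ⟨w, hwf⟩ hP hp hx (hwh y))
    · exact (hwh y ▸ hh.strategyProof_left P hP w y).trans (hf.symm_le_of_mem_branch hP hwf hp
        (mem_branch_of_cutBetween hf.connected hx (hf.gated.cutBetween_left x (hwf y))))
    · exact hh.strategyProof_left P hP x y
  strategyProof_right P hP x y := by
    simp only [_root_.splice]
    split_ifs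
    · exact hf.strategyProof_right P hP x y
    · exact hh.strategyProof_right P hP x y

theorem dictatorZone_splice_subset (hrf : w ∈ dictatorZone h) :
    dictatorZone (_root_.splice (branch (adjGraph D) (dictatorZone f) w) f h) ⊆
      dictatorZone h := by
  intro x hx
  by_cases hxS : x ∈ branch (adjGraph D) (dictatorZone f) w
  · have hxf : x ∈ dictatorZone f := fun y => by
      simpa only [_root_.splice, if_pos hxS] using hx y
    exact eq_of_mem_branch_of_mem hxS hxf ▸ hrf
  · intro y
    simpa only [_root_.splice, if_neg hxS] using hx y

theorem glue_strategyProof_left (hf : PeakRule D f) (hh : PeakRule D h)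
    (hw : ∀ y ∈ S, f w y = w)
    (hfw : ∀ P ∈ D, peak P ∉ S → ∀ x ∈ S, ∀ y ∈ S, P.symm w ≤ P.symm (f x y))
    (hhw : ∀ P ∈ D, peak P ∈ S → ∀ x ∉ S, ∀ y ∉ S, P.symm w ≤ P.symm (h x y))
    (hwh : ∀ P ∈ D, peak P ∉ S → ∀ y ∉ S, P.symm (h (peak P) y) ≤ P.symm w) :
    ∀ P ∈ D, ∀ x y, P.symm (_root_.glue S w f h (peak P) y) ≤
      P.symm (_root_.glue S w f h x y) := by
  intro P hP x y
  simp only [_root_.glue]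
  split_ifs with hp hy hx hx hy hx hx
  · exact hf.strategyProof_left P hP x y
  · exact hw y hy ▸ hf.strategyProof_left P hP w y
  · exact le_rfl
  · exact hhw P hP hp x hx y hy
  · exact hfw P hP hp x hx y hy
  · exact le_rfl
  · exact hwh P hP hp y hy
  · exact hh.strategyProof_left P hP x y

theorem glue (hf : PeakRule D f) (hh : PeakRule D h) (hne : (dictatorZone f).Nonempty)
    (hw : w ∈ dictatorZone h)
    (hbest : ∀ P ∈ D, peak P ∉ branch (adjGraph D) (dictatorZone f) w →
      ∀ e ∈ branch (adjGraph D) (dictatorZone f) w, P.symm w ≤ P.symm e)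
    (hle : ∀ P ∈ D, peak P ∉ branch (adjGraph D) (dictatorZone f) w →
      ∀ y ∉ branch (adjGraph D) (dictatorZone f) w, P.symm (h y (peak P)) ≤ P.symm w) :
    PeakRule D (glue (branch (adjGraph D) (dictatorZone f) w) w f h) := by
  set S := branch (adjGraph D) (dictatorZone f) w
  have apply_mem (x : V) (hx : x ∈ S) (y : V) (hy : y ∈ S) : f x y ∈ S :=
    mem_branch_of_cutBetween hf.connected hx
      (hf.gated.cutBetween_left x (hf.gated.apply_right_of_mem_branch hne hy))
  have le_apply (P : Pref V) (hP : P ∈ D) (hp : peak P ∈ S) (x : V) (hx : x ∉ S) (y : V) :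
      P.symm w ≤ P.symm (h x y) :=
    hf.symm_le_apply_of_notMem_branch hh hne hP hp hx (hw y)
  refine ⟨hf.connected, hf.rich, fun x => ?_, ?_, fun P hP x y => ?_⟩
  · simp only [_root_.glue, hf.unanimous, hh.unanimous]
    split_ifs <;> rfl
  · refine hf.glue_strategyProof_left hh (fun y => hf.gated.apply_right_of_mem_branch hne)
      (fun P hP hp x hx y hy => hbest P hP hp _ (apply_mem x hx y hy))
      (fun P hP hp x hx y _ => le_apply P hP hp x hx y) fun P hP _ y _ => ?_
    exact hw y ▸ hh.strategyProof_left P hP w y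
  · have hflip := hf.flip.glue_strategyProof_left hh.flip
      (fun y => hf.gated.apply_left_of_mem_branch hne)
      (fun P hP hp x hx y hy => hbest P hP hp _ (apply_mem y hy x hx))
      (fun P hP hp x _ y hy => le_apply P hP hp y hy x) hle P hP y x
    rwa [← flip_glue] at hflip

end PeakRule

namespace NoInvariantRule

theorem not_peakRule_glue (hN : NoInvariantRule D Pl Pu) (hf : PeakRule D f)
    (hne : (dictatorZone f).Nonempty) :
    ¬ PeakRule D (glue (branch (adjGraph D) (dictatorZone f) w) w f h) := fun hg => by
  have hw := self_mem_branch (adjGraph D) (dictatorZone f) w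
  refine hN.notMem_zone_flip hg
    (mem_dictatorZone_glue hw (fun y => hf.gated.apply_right_of_mem_branch hne) h) ?_
  rw [flip_glue]
  exact mem_dictatorZone_glue hw (fun y => hf.gated.apply_left_of_mem_branch hne) _

theorem zone_ne_pair (hN : NoInvariantRule D Pl Pu) (hf : PeakRule D f) (hab : a ≠ b) :
    dictatorZone f ≠ {a, b} := fun hZ => by
  have ha : a ∈ dictatorZone f := hZ ▸ .inl rfl
  have hb : b ∈ dictatorZone f := hZ ▸ .inr rfl
  have hS (x : V) (hx : x ∉ branch (adjGraph D) (dictatorZone f) b) :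
      x ∈ branch (adjGraph D) (dictatorZone f) a := by
    have hroot := hf.gated.mem_branch_root x a
    have hmem := hf.gated.root_mem_zone ha x
    simp only [hZ, Set.mem_insert_iff, Set.mem_singleton_iff] at hmem
    rcases hmem with heq | heq
    · exact heq ▸ hroot
    · exact absurd (heq ▸ hroot) hx
  refine hN.not_peakRule_glue hf ⟨b, hb⟩ (hf.glue hf ⟨b, hb⟩ hb
    (fun P hP hp e => hf.symm_le_of_mem_branch hP hb hp) fun P hP hp y hy => ?_)
  refine (hf.strategyProof_right P hP y a).trans ?_
  rw [hf.gated.apply_left_of_mem_branch ⟨a, ha⟩ (hS y hy)]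
  exact hf.symm_le_of_notMem_branch ⟨a, ha⟩ hP (hS _ hp) fun hba =>
    hab (eq_of_mem_branch_of_mem hba hb).symm

theorem not_zone_subset_branch (hN : NoInvariantRule D Pl Pu) (hf : PeakRule D f)
    (hh : PeakRule D h) (hne : (dictatorZone f).Nonempty) (hw : w ∈ dictatorZone h) :
    ¬ dictatorZone h ⊆ branch (adjGraph D) (dictatorZone f) w := fun hsub => by
  have apply_eq (x : V) (hx : x ∉ branch (adjGraph D) (dictatorZone f) w) : h x w = w :=
    hh.gated.apply_left_of_mem_branch ⟨w, hw⟩ fun j hj =>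
      (cutBetween_of_mem_branch (hsub hj) hx).symm
  refine hN.not_peakRule_glue hf hne (hf.glue hh hne hw (fun P hP hp e he => ?_)
    fun P hP _ y hy => ?_)
  · exact hh.symm_le_of_apply_eq hP hp he (apply_eq _ hp) (hw e)
  · exact (hh.strategyProof_right P hP y w).trans_eq (congrArg P.symm (apply_eq y hy))

theorem exists_ssubset_zone (hN : NoInvariantRule D Pl Pu) (hf : PeakRule D f)
    (hh : PeakRule D h) (hne : (dictatorZone f).Nonempty)
    (hsub : ¬ dictatorZone h ⊆ dictatorZone f) :
    ∃ k, PeakRule D k ∧ (dictatorZone k).Nonempty ∧ dictatorZone k ⊂ dictatorZone h := by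
  obtain ⟨u, huh, huf⟩ := Set.not_subset.1 hsub
  obtain ⟨z, hz⟩ := id hne
  have hrf := hf.gated.root_mem_zone hz u
  have hur := hf.gated.mem_branch_root u z
  set r := f u z
  by_cases hrh : r ∈ dictatorZone h
  · refine ⟨_, hf.splice hh hrf hrh, ⟨r, fun y => ?_⟩,
      (Set.ssubset_iff_of_subset (PeakRule.dictatorZone_splice_subset hrh)).2
        ⟨u, huh, fun hu => huf fun y => ?_⟩⟩
    · rw [splice, if_pos (self_mem_branch _ _ _), hrf]
    · simpa only [splice, if_pos hur] using hu y
  · refine absurd (fun i hi => ?_)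
      (hN.not_zone_subset_branch hf hh hne (hh.gated.root_mem_zone huh r))
    have hir : i ∈ branch (adjGraph D) (dictatorZone f) r := by_contra fun hi' =>
      hrh (hh.gated.mem_zone_of_cutBetween huh hi (cutBetween_of_mem_branch hur hi'))
    exact fun j hj => (hir j hj).trans_left (hh.gated.mem_branch_root r u i hi).symm

end NoInvariantRule

end Mixtures

/-! ### Projections and semi-hybrid preferences on a tree -/

section TreeInterface

variable {V : Type*} {T : SimpleGraph V} {B : Set V} {a b c m x y z : V}

theorem mem_intv_iff (hT : T.IsTree) : z ∈ intv T x y ↔ CutBetween T x z y :=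
  (CutBetween.iff_dist hT).symm

theorem mem_sideSet_iff (hT : T.IsTree) : x ∈ sideSet T a b ↔ CutBetween T x a b :=
  mem_intv_iff hT

theorem intv_comm (hT : T.IsTree) (x y : V) : intv T x y = intv T y x :=
  Set.ext fun _ => by simpa only [mem_intv_iff hT] using ⟨CutBetween.symm, CutBetween.symm⟩

variable [Fintype V]

theorem projOn_eq (hT : T.IsTree) (h : IsProjPt T B a m) : projOn T B a = m := by
  have hex : ∃ a', IsProjPt T B a a' := ⟨m, h⟩
  rw [projOn, dif_pos hex]
  exact CutBetween.antisymm_right hT.1 ((mem_intv_iff hT).1 (hex.choose_spec.2 m h.1))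
    ((mem_intv_iff hT).1 (h.2 _ hex.choose_spec.1))

theorem projOn_intv_eq (hT : T.IsTree) (hxy : CutBetween T x m y) (hx : CutBetween T x m a)
    (hy : CutBetween T y m a) : projOn T (intv T x y) a = m :=
  projOn_eq hT ⟨(mem_intv_iff hT).2 hxy, fun _ hc => (mem_intv_iff hT).2
    (CutBetween.of_between hT.1 hx hy ((mem_intv_iff hT).1 hc)).symm⟩

theorem projOn_intv_spec (hT : T.IsTree) (x y a : V) :
    CutBetween T x (projOn T (intv T x y) a) y ∧ CutBetween T x (projOn T (intv T x y) a) a ∧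
      CutBetween T y (projOn T (intv T x y) a) a := by
  obtain ⟨m, hxy, hx, hy⟩ := CutBetween.exists_median hT x y a
  exact projOn_intv_eq hT hxy hx hy ▸ ⟨hxy, hx, hy⟩

theorem semiSP_iff [Nonempty V] {P : Pref V} (hT : T.IsTree) :
    SemiSP T a P ↔ ∀ m c, CutBetween T (peak P) m c → CutBetween T (peak P) m a →
      P.symm m ≤ P.symm c := by
  constructor
  · intro ⟨hpath, hproj⟩ m c hmc hma
    have le_of_mem (c : V) (hc : CutBetween T (peak P) c a) (hmc : CutBetween T (peak P) m c) :
        P.symm m ≤ P.symm c := by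
      by_cases hne : m = c
      · exact hne ▸ le_rfl
      · exact (hpath m c ((mem_intv_iff hT).2 hma) ((mem_intv_iff hT).2 hc) hne
          ((mem_intv_iff hT).2 hmc)).le
    by_cases hc : c ∈ intv T (peak P) a
    · exact le_of_mem c ((mem_intv_iff hT).1 hc) hmc
    · obtain ⟨hpa, -, hac⟩ := projOn_intv_spec hT (peak P) a c
      exact (le_of_mem _ hpa (CutBetween.of_between hT.1 hma.symm hmc.symm hac).symm).trans
        (hproj c hc).le
  · refine fun h => ⟨fun c d hc _ hcd hpcd => ?_, fun c hc => ?_⟩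
    · exact prefers_of_le_of_ne (h c d ((mem_intv_iff hT).1 hpcd) ((mem_intv_iff hT).1 hc)) hcd
    · obtain ⟨hpa, hpc, -⟩ := projOn_intv_spec hT (peak P) a c
      exact prefers_of_le_of_ne (h _ c hpc hpa) fun heq =>
        hc (heq ▸ (mem_intv_iff hT).2 hpa)

end TreeInterface

namespace ZoneTree

section Graph

variable {V : Type*} {G T : SimpleGraph V} {g : V → V → V} {a b : V}

theorem intv_eq_zone (h : ZoneTree G g T a b) : intv T a b = dictatorZone g :=
  Set.ext fun z => (mem_intv_iff h.isTree).trans (h.between_iff z)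

theorem dualThresholds [Fintype V] (h : ZoneTree G g T a b) : DualThresholds T a b := by
  refine ⟨h.ne, fun c hc => ?_⟩
  rw [h.intv_eq_zone] at hc ⊢
  rw [projOn_eq h.isTree ⟨h.rule.root_mem_zone h.left_mem_zone c,
    fun w hw => (mem_intv_iff h.isTree).2 (h.cutBetween_root c hw)⟩]
  exact h.root_eq_left_or_right hc

end Graph

variable {V : Type*} [Fintype V] [Nonempty V] {D : Set (Pref V)} {T : SimpleGraph V}
  {g : V → V → V} {a b : V} {P : Pref V}

theorem semiSP (h : ZoneTree (adjGraph D) g T a b) (hg : PeakRule D g) (hP : P ∈ D)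
    (hp : CutBetween T (peak P) a b) : SemiSP T a P := by
  have hT := h.isTree
  refine (semiSP_iff hT).2 fun m c hmc hma => ?_
  obtain ⟨-, hμa, hcμa⟩ := h.median_apply hp c
  have hle : P.symm (g (peak P) c) ≤ P.symm c := by
    simpa only [hg.unanimous] using hg.strategyProof_left P hP c c
  set μ := g (peak P) c
  have hmμ : CutBetween T (peak P) m μ :=
    (CutBetween.of_between hT.1 hmc.symm hma.symm hcμa).symm
  have hpm : g (peak P) m = m := by
    obtain ⟨hm, -, ha⟩ := h.median_apply hp m
    exact CutBetween.eq_of_between hT.1 hma hm ha.symm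
  have hμm : g μ m = μ := by
    obtain ⟨hm, ha, -⟩ := h.median_apply (CutBetween.cancel_left hT.1 hμa hp) m
    exact CutBetween.eq_of_between hT.1 (CutBetween.cancel_left hT.1 hmμ hμa) hm.symm ha.symm
  calc P.symm m = P.symm (g (peak P) m) := by rw [hpm]
    _ ≤ P.symm (g μ m) := hg.strategyProof_left P hP μ m
    _ = P.symm μ := by rw [hμm]
    _ ≤ P.symm c := hle

theorem isBestOf_left (h : ZoneTree (adjGraph D) g T a b) (hg : PeakRule D g) (hP : P ∈ D)
    (hp : CutBetween T (peak P) a b → peak P = a) : IsBestOf P a (sideSet T a b) := by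
  refine ⟨(mem_sideSet_iff h.isTree).2 (.left a b), fun y hy hya =>
    prefers_of_le_of_ne ?_ hya.symm⟩
  rw [mem_sideSet_iff h.isTree, h.cutBetween_iff_mem_branch] at hy
  rw [h.cutBetween_iff_mem_branch] at hp
  by_cases hpa : peak P ∈ branch (adjGraph D) (dictatorZone g) a
  · exact hp hpa ▸ symm_peak_le P y
  · exact hg.symm_le_of_mem_branch hP h.left_mem_zone hpa hy

theorem semiHybridPref (h : ZoneTree (adjGraph D) g T a b) (hg : PeakRule D g) (hP : P ∈ D) :
    SemiHybridPref T a b P := by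
  have hT := h.isTree
  simp only [SemiHybridPref, Set.mem_sdiff, mem_sideSet_iff hT, mem_intv_iff hT]
  refine ⟨fun ⟨hp, _⟩ => ⟨h.semiSP hg hP hp, h.symm.isBestOf_left hg hP fun hp' => ?_⟩,
    fun ⟨hp, _⟩ => ⟨h.symm.semiSP hg hP hp, h.isBestOf_left hg hP fun hp' => ?_⟩,
    fun hp => ⟨h.isBestOf_left hg hP fun hp' => ?_, h.symm.isBestOf_left hg hP fun hp' => ?_⟩⟩
  · exact absurd (hp.antisymm_right hT.1 hp') h.ne
  · exact absurd (hp'.antisymm_right hT.1 hp) h.ne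
  · exact hp.antisymm_left hT.1 hp'
  · exact hp.symm.antisymm_left hT.1 hp'

end ZoneTree

theorem NoInvariantRule.exists_zoneTree {V : Type*} [Fintype V] [Nonempty V] {D : Set (Pref V)}
    {Pl Pu : Pref V} {g : V → V → V} (hN : NoInvariantRule D Pl Pu) (hg : PeakRule D g)
    (hne : (dictatorZone g).Nonempty) : ∃ T a b, ZoneTree (adjGraph D) g T a b := by
  obtain ⟨hl, hu⟩ := hN.mem_zone hg hne
  have hbl := hg.gated.mem_branch_root (peak Pl) (peak Pu)
  have hbu := hg.gated.mem_branch_root (peak Pu) (peak Pl)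
  obtain ⟨T, hT⟩ := hg.gated.exists_zoneTree hl hu (hN.apply_ne g hg) fun v hv hvl hvu x hx => by
    have hroot {p r : V} (hr : r ∈ dictatorZone g)
        (hp : p ∈ branch (adjGraph D) (dictatorZone g) r) (hvr : v ≠ r) :
        p ∉ branch (adjGraph D) (dictatorZone g) v := fun hp' =>
      hvr ((hp v hv).antisymm_right hg.connected (hp' r hr)).symm
    have hlx := hg.symm_le_of_mem_branch hN.left_mem hv (hroot hl hbl hvl) hx
    have hux := hg.symm_le_of_mem_branch hN.right_mem hv (hroot hu hbu hvu) hx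
    exact Pu.symm.injective ((hN.reversed.symm_le hlx).antisymm hux)
  exact ⟨T, _, _, hT⟩

/-! ### Hybrid rules -/

/-- The hybrid rule of the peaks on `T` with thresholds `a` and `b` and dictator the first voter. -/
noncomputable def hybridRule {V : Type*} [Fintype V] (T : SimpleGraph V) (a b x y : V) : V :=
  if CutBetween T x a b then projOn T (intv T x y) a
  else if CutBetween T x b a then projOn T (intv T x y) b
  else x

theorem hybridRule_of_not_cutBetween {V : Type*} [Fintype V] {T : SimpleGraph V}
    {a b x : V} (hxa : ¬ CutBetween T x a b) (hxb : ¬ CutBetween T x b a) (y : V) :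
    hybridRule T a b x y = x := by
  simp only [hybridRule, if_neg hxa, if_neg hxb]

/-- The preferences of `D` are `(a, b)`-semi-hybrid on the tree `T`; neither connectedness of the
adjacency graph of `D` nor minimality of the free zone is part of the notion. -/
structure SemiHybridOn {V : Type*} [Fintype V] [Nonempty V] (D : Set (Pref V))
    (T : SimpleGraph V) (a b : V) : Prop where
  isTree : T.IsTree
  dualThresholds : DualThresholds T a b
  semiHybridPref : ∀ P ∈ D, SemiHybridPref T a b P

namespace SemiHybridOn

variable {V : Type*} [Fintype V] [Nonempty V] {D : Set (Pref V)} {T : SimpleGraph V}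
  {P : Pref V} {a b c x y : V}

theorem symm (h : SemiHybridOn D T a b) : SemiHybridOn D T b a where
  isTree := h.isTree
  dualThresholds := ⟨h.dualThresholds.1.symm, fun c hc => by
    rw [intv_comm h.isTree] at hc ⊢
    exact (h.dualThresholds.2 c hc).symm⟩
  semiHybridPref P hP := by
    obtain ⟨hab, hba, hfree⟩ := h.semiHybridPref P hP
    exact ⟨hba, hab, fun hp => (hfree (intv_comm h.isTree b a ▸ hp)).symm⟩

theorem cutBetween_cases (h : SemiHybridOn D T a b) (x : V) :
    CutBetween T x a b ∨ CutBetween T x b a ∨ CutBetween T a x b := by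
  by_cases hx : x ∈ intv T a b
  · exact .inr (.inr ((mem_intv_iff h.isTree).1 hx))
  · obtain ⟨-, hax, hbx⟩ := projOn_intv_spec h.isTree a b x
    rcases h.dualThresholds.2 x hx with hproj | hproj <;> rw [hproj] at hax hbx
    · exact .inl hbx.symm
    · exact .inr (.inl hax.symm)

theorem not_cutBetween (h : SemiHybridOn D T a b) (hx : CutBetween T x a b) :
    ¬ CutBetween T x b a := fun hx' =>
  h.dualThresholds.1 (hx.antisymm_right h.isTree.1 hx')

theorem semiSP (h : SemiHybridOn D T a b) (hP : P ∈ D) (hp : CutBetween T (peak P) a b) :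
    SemiSP T a P := by
  by_cases hpa : peak P = a
  · refine (semiSP_iff h.isTree).2 fun m c _ hm => ?_
    rw [hpa] at hm
    exact hm.eq_of_self ▸ hpa ▸ symm_peak_le P c
  · exact ((h.semiHybridPref P hP).1 ⟨(mem_sideSet_iff h.isTree).2 hp, hpa⟩).1

theorem symm_left_le (h : SemiHybridOn D T a b) (hP : P ∈ D)
    (hp : ¬ CutBetween T (peak P) a b) (hy : CutBetween T y a b) : P.symm a ≤ P.symm y := by
  have hT := h.isTree
  obtain ⟨-, hright, hfree⟩ := h.semiHybridPref P hP
  have hbest : IsBestOf P a (sideSet T a b) := by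
    rcases h.cutBetween_cases (peak P) with hp' | hp' | hp'
    · exact absurd hp' hp
    · by_cases hpb : peak P = b
      · exact (hfree ((mem_intv_iff hT).2 (by rw [hpb]; exact .right a b))).1
      · exact (hright ⟨(mem_sideSet_iff hT).2 hp', hpb⟩).2
    · exact (hfree ((mem_intv_iff hT).2 hp')).1
  by_cases hya : y = a
  · rw [hya]
  · exact (hbest.2 y ((mem_sideSet_iff hT).2 hy) hya).le

theorem hybridRule_comm (h : SemiHybridOn D T a b) : hybridRule T a b = hybridRule T b a := by
  ext x y
  by_cases hx : CutBetween T x a b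
  · simp only [hybridRule, if_pos hx, if_neg (h.not_cutBetween hx)]
  · simp only [hybridRule, if_neg hx]

theorem hybridRule_spec (h : SemiHybridOn D T a b) (hx : CutBetween T x a b) (y : V) :
    CutBetween T x (hybridRule T a b x y) y ∧ CutBetween T x (hybridRule T a b x y) a ∧
      CutBetween T y (hybridRule T a b x y) a := by
  simpa only [hybridRule, if_pos hx] using projOn_intv_spec h.isTree x y a

theorem cutBetween_hybridRule (h : SemiHybridOn D T a b) (hx : CutBetween T x a b) (y : V) :
    CutBetween T (hybridRule T a b x y) a b :=
  CutBetween.cancel_left h.isTree.1 (h.hybridRule_spec hx y).2.1 hx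

theorem not_cutBetween_hybridRule (h : SemiHybridOn D T a b) (hx : ¬ CutBetween T x a b) (y : V) :
    ¬ CutBetween T (hybridRule T a b x y) a b := by
  by_cases hx' : CutBetween T x b a
  · rw [h.hybridRule_comm]
    exact h.symm.not_cutBetween (h.symm.cutBetween_hybridRule hx' y)
  · rwa [hybridRule_of_not_cutBetween hx hx']

theorem strategyProof_left (h : SemiHybridOn D T a b) (hP : P ∈ D)
    (hp : CutBetween T (peak P) a b) (x y : V) :
    P.symm (hybridRule T a b (peak P) y) ≤ P.symm (hybridRule T a b x y) := by
  obtain ⟨hpy, hpa, -⟩ := h.hybridRule_spec hp y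
  refine (semiSP_iff h.isTree).1 (h.semiSP hP hp) _ _ ?_ hpa
  by_cases hx : CutBetween T x a b
  · exact (CutBetween.of_between h.isTree.1 hpy.symm hpa.symm (h.hybridRule_spec hx y).2.2).symm
  · exact CutBetween.trans_left
      ((hp.left_or_right _).resolve_right (h.not_cutBetween_hybridRule hx y)) hpa

theorem strategyProof_right (h : SemiHybridOn D T a b) (hP : P ∈ D) (hx : CutBetween T x a b)
    (y : V) : P.symm (hybridRule T a b x (peak P)) ≤ P.symm (hybridRule T a b x y) := by
  obtain ⟨hxp, hxa, hpa⟩ := h.hybridRule_spec hx (peak P)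
  by_cases hp : CutBetween T (peak P) a b
  · exact (semiSP_iff h.isTree).1 (h.semiSP hP hp) _ _
      (CutBetween.of_between h.isTree.1 hxp hpa.symm (h.hybridRule_spec hx y).2.1).symm hpa
  · have hxap := (hx.left_or_right (peak P)).resolve_right hp
    rw [CutBetween.eq_of_between h.isTree.1 hxap hxa hpa]
    exact h.symm_left_le hP hp (h.cutBetween_hybridRule hx y)

theorem peakRule (h : SemiHybridOn D T a b) (hconn : (adjGraph D).Connected) (hD : D.Nonempty) :
    PeakRule D (hybridRule T a b) where
  connected := hconn
  rich := minimallyRich_of_connected hconn hD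
  unanimous x := by
    have hself (c : V) : projOn T (intv T x x) c = x :=
      (projOn_intv_spec h.isTree x x c).1.eq_of_self
    simp only [hybridRule, hself, ite_self]
  strategyProof_left P hP x y := by
    by_cases ha : CutBetween T (peak P) a b
    · exact h.strategyProof_left hP ha x y
    by_cases hb : CutBetween T (peak P) b a
    · simpa only [h.hybridRule_comm] using h.symm.strategyProof_left hP hb x y
    · rw [hybridRule_of_not_cutBetween ha hb]
      exact symm_peak_le P _
  strategyProof_right P hP x y := by
    by_cases ha : CutBetween T x a b
    · exact h.strategyProof_right hP ha y
    by_cases hb : CutBetween T x b a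
    · simpa only [h.hybridRule_comm] using h.symm.strategyProof_right hP hb y
    · simp only [hybridRule_of_not_cutBetween ha hb, le_refl]

theorem eq_left_of_mem_zone (h : SemiHybridOn D T a b)
    (hx : CutBetween T x a b) (hzone : x ∈ dictatorZone (hybridRule T a b)) : x = a :=
  (hzone a).symm.trans (h.hybridRule_spec hx a).2.2.eq_of_self

theorem left_mem_zone (h : SemiHybridOn D T a b) : a ∈ dictatorZone (hybridRule T a b) := fun y =>
  (h.hybridRule_spec (.left a b) y).2.1.eq_of_self

theorem dictatorZone_hybridRule (h : SemiHybridOn D T a b) :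
    dictatorZone (hybridRule T a b) = intv T a b := by
  have right_mem : b ∈ dictatorZone (hybridRule T a b) :=
    h.hybridRule_comm ▸ h.symm.left_mem_zone
  ext x
  rw [mem_intv_iff h.isTree]
  by_cases hxa : CutBetween T x a b
  · refine ⟨fun hx => ?_, fun hx => ?_⟩
    · exact h.eq_left_of_mem_zone hxa hx ▸ .left x b
    · exact hx.antisymm_left h.isTree.1 hxa ▸ h.left_mem_zone
  by_cases hxb : CutBetween T x b a
  · refine ⟨fun hx => ?_, fun hx => ?_⟩
    · exact h.symm.eq_left_of_mem_zone hxb (h.hybridRule_comm ▸ hx) ▸ .right a x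
    · exact hx.symm.antisymm_left h.isTree.1 hxb ▸ right_mem
  · exact ⟨fun _ => ((h.cutBetween_cases x).resolve_left hxa).resolve_left hxb,
      fun _ => hybridRule_of_not_cutBetween hxa hxb⟩

end SemiHybridOn

/-! ### Two-voter social choice functions -/

section SocialChoice

theorem inDom_pair {V : Type*} [Fintype V] {D : Set (Pref V)} {P Q : Pref V} (hP : P ∈ D)
    (hQ : Q ∈ D) : InDom D ![P, Q] :=
  Fin.forall_fin_two.2 ⟨hP, hQ⟩

theorem StrategyProof.symm_le {V : Type*} [Fintype V] {D : Set (Pref V)} {n : ℕ}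
    {f : (Fin n → Pref V) → V} (h : StrategyProof D f) {P P' : Fin n → Pref V} (hP : InDom D P)
    (hP' : InDom D P') (i : Fin n) (hrest : ∀ j, j ≠ i → P' j = P j) :
    (P i).symm (f P) ≤ (P i).symm (f P') := by
  rw [Function.eq_update_iff.2 ⟨rfl, hrest⟩]
  exact (h P hP i (P' i) (hP' i)).elim (fun heq => heq ▸ le_rfl) le_of_lt

variable {V : Type*} [Fintype V] [Nonempty V] {D : Set (Pref V)} {Pl Pu : Pref V}
  {f : (Fin 2 → Pref V) → V} {g : V → V → V} {T : SimpleGraph V} {a b : V}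

theorem NoInvariantRule.of_not_exists (hPl : Pl ∈ D) (hPu : Pu ∈ D) (hrev : Reversed Pl Pu)
    (hnoinv : ¬ ∃ g : (Fin 2 → Pref V) → V,
      IsRule D g ∧ TopsOnly D g ∧ StrategyProof D g ∧ g ![Pl, Pu] = g ![Pu, Pl]) :
    NoInvariantRule D Pl Pu where
  left_mem := hPl
  right_mem := hPu
  reversed := hrev
  apply_ne g hg hinv := by
    refine hnoinv ⟨fun P => g (peak (P 0)) (peak (P 1)), fun P _ x hx => ?_,
      fun P P' _ _ hpeak => ?_, fun P hP i Q _ => or_iff_not_imp_left.2 fun hne =>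
        prefers_of_le_of_ne ?_ hne, hinv⟩
    · simp only [hx, hg.unanimous]
    · simp only [hpeak]
    · fin_cases i
      · simpa using hg.strategyProof_left (P 0) (hP 0) (peak Q) (peak (P 1))
      · simpa using hg.strategyProof_right (P 1) (hP 1) (peak (P 0)) (peak Q)

theorem exists_peakRule (hconn : (adjGraph D).Connected) (hD : D.Nonempty) (hrule : IsRule D f)
    (hto : TopsOnly D f) (hsp : StrategyProof D f) :
    ∃ g, PeakRule D g ∧ ∀ P, InDom D P → f P = g (peak (P 0)) (peak (P 1)) := by
  have hrich := minimallyRich_of_connected hconn hD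
  choose Q hQ hpeak using id hrich
  have hf (P : Fin 2 → Pref V) (hP : InDom D P) :
      f P = f ![Q (peak (P 0)), Q (peak (P 1))] :=
    hto _ _ hP (inDom_pair (hQ _) (hQ _)) (Fin.forall_fin_two.2 ⟨(hpeak _).symm, (hpeak _).symm⟩)
  refine ⟨fun x y => f ![Q x, Q y], ⟨hconn, hrich, fun x => ?_, fun P hP x y => ?_,
    fun P hP x y => ?_⟩, hf⟩
  · exact hrule _ (inDom_pair (hQ x) (hQ x)) x (Fin.forall_fin_two.2 ⟨hpeak x, hpeak x⟩)
  · have hPy := inDom_pair hP (hQ y)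
    simpa [hf _ hPy, hpeak] using
      hsp.symm_le hPy (inDom_pair (hQ x) (hQ y)) 0 (by simp [Fin.forall_fin_two])
  · have hxP := inDom_pair (hQ x) hP
    simpa [hf _ hxP, hpeak] using
      hsp.symm_le hxP (inDom_pair (hQ x) (hQ y)) 1 (by simp [Fin.forall_fin_two])

theorem NoInvariantRule.exists_dictatorZone_nonempty (hN : NoInvariantRule D Pl Pu)
    (hg : PeakRule D g) (hf : ∀ P, InDom D P → f P = g (peak (P 0)) (peak (P 1))) :
    ∃ (i : Fin 2) (h : V → V → V), PeakRule D h ∧ (dictatorZone h).Nonempty ∧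
      ∀ P, InDom D P → f P = h (peak (P i)) (peak (P i.rev)) :=
  (hN.mem_zone_or_mem_zone_flip hg).elim (fun hzone => ⟨0, g, hg, ⟨_, hzone.1⟩, hf⟩)
    fun hzone => ⟨1, flip g, hg.flip, ⟨_, hzone.1⟩, hf⟩

theorem NoInvariantRule.three_le_ncard_zone (hN : NoInvariantRule D Pl Pu) (hg : PeakRule D g)
    (h : ZoneTree (adjGraph D) g T a b) : 3 ≤ (dictatorZone g).ncard := by
  by_contra! hlt
  refine hN.zone_ne_pair hg h.ne (Set.eq_of_subset_of_ncard_le ?_ ?_).symm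
  · exact Set.pair_subset h.left_mem_zone h.symm.left_mem_zone
  · rw [Set.ncard_pair h.ne]
    omega

theorem NoInvariantRule.intv_subset_zone (hN : NoInvariantRule D Pl Pu) (hg : PeakRule D g)
    (hne : (dictatorZone g).Nonempty) (hSH : SemiHybridOn D T a b)
    (hmin : ¬ ∃ (T' : SimpleGraph V) (a' b' : V), T'.IsTree ∧ DualThresholds T' a' b' ∧
      D ⊆ {P | SemiHybridPref T' a' b' P} ∧ intv T' a' b' ⊂ intv T a b) :
    intv T a b ⊆ dictatorZone g := by
  rw [← hSH.dictatorZone_hybridRule] at hmin ⊢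
  by_contra hsub
  obtain ⟨k, hk, hkne, hlt⟩ :=
    hN.exists_ssubset_zone hg (hSH.peakRule hg.connected ⟨Pl, hN.left_mem⟩) hne hsub
  obtain ⟨T', a', b', hT'⟩ := hN.exists_zoneTree hk hkne
  exact hmin ⟨T', a', b', hT'.isTree, hT'.dualThresholds, fun P hP => hT'.semiHybridPref hk hP,
    hT'.intv_eq_zone ▸ hlt⟩

theorem gammaSet_eq_intv (hT : T.IsTree) (P : Fin 2 → Pref V) (i : Fin 2) :
    gammaSet T P = intv T (peak (P i)) (peak (P i.rev)) := by
  have hpair : gammaSet T P = intv T (peak (P 0)) (peak (P 1)) := by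
    have hself (x y : V) : intv T x x ⊆ intv T x y ∩ intv T y x := fun c hc => by
      rw [((mem_intv_iff hT).1 hc).eq_of_self]
      exact ⟨(mem_intv_iff hT).2 (.left x y), (mem_intv_iff hT).2 (.right y x)⟩
    have hcomm := intv_comm hT (peak (P 1)) (peak (P 0))
    ext c
    have hc₀ := @hself (peak (P 0)) (peak (P 1)) c
    have hc₁ := @hself (peak (P 1)) (peak (P 0)) c
    simp only [gammaSet, Set.mem_ofPred_eq, Fin.exists_fin_two, hcomm, Set.mem_inter_iff]
      at hc₀ hc₁ ⊢
    tauto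
  fin_cases i
  · exact hpair
  · exact hpair.trans (intv_comm hT _ _)

theorem ZoneTree.apply_eq_projOn_gammaSet (h : ZoneTree (adjGraph D) g T a b) {i : Fin 2}
    {P : Fin 2 → Pref V} (hp : CutBetween T (peak (P i)) a b) :
    g (peak (P i)) (peak (P i.rev)) = projOn T (gammaSet T P) a := by
  obtain ⟨hxy, hxa, hya⟩ := h.median_apply hp (peak (P i.rev))
  rw [gammaSet_eq_intv h.isTree P i, projOn_intv_eq h.isTree hxy hxa hya]

theorem ZoneTree.isHybridRule (h : ZoneTree (adjGraph D) g T a b)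
    (hcard : 3 ≤ (dictatorZone g).ncard) {i : Fin 2}
    (hf : ∀ P, InDom D P → f P = g (peak (P i)) (peak (P i.rev))) : IsHybridRule D f T a b := by
  refine ⟨h.isTree, h.dualThresholds, h.intv_eq_zone ▸ hcard, i, fun P hP => ?_⟩
  simp only [Set.mem_sdiff, mem_sideSet_iff h.isTree, h.intv_eq_zone, hf P hP]
  exact ⟨fun hp => hp _, fun hp => h.apply_eq_projOn_gammaSet hp.1,
    fun hp => h.symm.apply_eq_projOn_gammaSet hp.1⟩

end SocialChoice

theorem stmt4_hybrid_rule_characterization_general {V : Type*} [Fintype V] [Nonempty V]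
    {D : Set (Pref V)} (hconn : PathConnectedDom D) {Pl Pu : Pref V} (hPl : Pl ∈ D)
    (hPu : Pu ∈ D) (hrev : Reversed Pl Pu)
    (hnoinv : ¬ ∃ g : (Fin 2 → Pref V) → V,
      IsRule D g ∧ TopsOnly D g ∧ StrategyProof D g ∧ g ![Pl, Pu] = g ![Pu, Pl])
    {T : SimpleGraph V} {a b : V} (hT : T.IsTree) (hab : DualThresholds T a b)
    (hD : D ⊆ {P | SemiHybridPref T a b P})
    (hmin : ¬ ∃ (T' : SimpleGraph V) (a' b' : V), T'.IsTree ∧ DualThresholds T' a' b' ∧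
      D ⊆ {P | SemiHybridPref T' a' b' P} ∧ intv T' a' b' ⊂ intv T a b)
    {f : (Fin 2 → Pref V) → V} (hrule : IsRule D f) (hto : TopsOnly D f)
    (hsp : StrategyProof D f) :
    (∃ (T' : SimpleGraph V) (a' b' : V),
      IsHybridRule D f T' a' b' ∧ intv T a b ⊆ intv T' a' b') ∧
    DictatorOn D f (intv T a b) := by
  have hN := NoInvariantRule.of_not_exists hPl hPu hrev hnoinv
  obtain ⟨g₀, hg₀, hf₀⟩ := exists_peakRule hconn ⟨Pl, hPl⟩ hrule hto hsp
  obtain ⟨i, g, hg, hne, hf⟩ := hN.exists_dictatorZone_nonempty hg₀ hf₀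
  have hsub : intv T a b ⊆ dictatorZone g := hN.intv_subset_zone hg hne ⟨hT, hab, hD⟩ hmin
  obtain ⟨T', a', b', hT'⟩ := hN.exists_zoneTree hg hne
  exact ⟨⟨T', a', b', hT'.isHybridRule (hN.three_le_ncard_zone hg hT') hf,
    hT'.intv_eq_zone.symm ▸ hsub⟩, i, fun P hP hpeak => (hf P hP).trans (hsub (hpeak i) _)⟩

/-- on a non-dictatorial, unidimensional, `(a,b)`-semi-hybrid domain
admitting no invariant, tops-only and strategy-proof two-voter rule, every
tops-only and strategy-proof two-voter rule is a hybrid rule whose free zone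
contains `⟨a, b|T⟩`; in particular it behaves like a dictatorship on `⟨a, b|T⟩`. -/
theorem stmt4_hybrid_rule_characterization (D : Set (Pref A)) (hD : D.Nonempty)
    (hcard : 3 ≤ Fintype.card A) (huni : Unidimensional D)
    (hnd : ¬ DictatorialDomain D)
    (Pl Pu : Pref A) (hPl : Pl ∈ D) (hPu : Pu ∈ D) (hrev : Reversed Pl Pu)
    (hnoinv : ¬ ∃ g : (Fin 2 → Pref A) → A,
        IsRule D g ∧ TopsOnly D g ∧ StrategyProof D g ∧ g ![Pl, Pu] = g ![Pu, Pl])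
    (T : SimpleGraph A) (a b : A) (hsh : SemiHybridDomainOn D T a b)
    (f : (Fin 2 → Pref A) → A) (hrule : IsRule D f) (hto : TopsOnly D f)
    (hsp : StrategyProof D f) :
    (∃ (T' : SimpleGraph A) (a' b' : A),
      IsHybridRule D f T' a' b' ∧ intv T a b ⊆ intv T' a' b') ∧
    DictatorOn D f (intv T a b) := by
  obtain ⟨hT, hab, hsub, hconn, hmin, -⟩ := hsh
  exact stmt4_hybrid_rule_characterization_general hconn hPl hPu hrev hnoinv hT hab hsub hmin
    hrule hto hsp
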